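/- Let p ∈ (0,∞), q ∈ (0,∞], p₀ ∈ [1,∞), 0 < r₁ ≤ r₂ ≤ p/p₀, l ∈ ℕ, let γ be a weight on ℝⁿ with γ^p ∈ A^{loc}_{p₀}(ℝⁿ), let α₃ ≥ 0, 0 < α₁ ≤ α₂ < l, let {s_k} ∈ locY^{α₃}_{α₁,α₂}, and set t_k(x) := γ(x)·s_k(x). Then B̄^l_{p,q,r₁}(ℝⁿ,{t_k}) = B̃^l_{p,q,r₂}(ℝⁿ,{t_k}) as sets of (a.e.-equivalence classes of) functions, and the corresponding quasi-norms are equivalent: there exist C₁, C₂ > 0 with C₁·‖φ | B̄^l_{p,q,r₁}‖ ≤ ‖φ | B̃^l_{p,q,r₂}‖ ≤ C₂·‖φ | B̄^l_{p,q,r₁}‖ for all φ. -/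

import Mathlib

open MeasureTheory ENNReal Filter
open scoped Classical

noncomputable section

/-- `ℓ_q` quasinorm of a family of extended nonnegative reals (supremum when `q = ∞`). -/
def lqNorm {ι : Type*} (q : ℝ≥0∞) (c : ι → ℝ≥0∞) : ℝ≥0∞ :=
  if q = ∞ then ⨆ i, c i else (∑' i, c i ^ q.toReal) ^ (1 / q.toReal)

/-- `L_p` quasinorm of an `ℝ≥0∞`-valued function (essential supremum when `p = ∞`). -/
def lpNormE {α : Type*} [MeasurableSpace α] (p : ℝ≥0∞) (μ : Measure α) (f : α → ℝ≥0∞) : ℝ≥0∞ :=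
  if p = ∞ then essSup f μ else (∫⁻ x, f x ^ p.toReal ∂μ) ^ (1 / p.toReal)

abbrev Rn (n : ℕ) := Fin n → ℝ

/-- Open cube centred at `x` of half-side `s` (i.e. `x + s·Iⁿ`). -/
def openCube {n : ℕ} (x : Rn n) (s : ℝ) : Set (Rn n) := {y | ∀ i, |y i - x i| < s}

/-- Open axis-parallel cube with lower corner `c` and side `s`. -/
def cubeAt {n : ℕ} (c : Rn n) (s : ℝ) : Set (Rn n) := {x | ∀ i, c i < x i ∧ x i < c i + s}

/-- Open dyadic cube `Q^n_{k,m}` of side `2^{-k}`. -/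
def dyadicCube (n k : ℕ) (m : Fin n → ℤ) : Set (Rn n) :=
  {x | ∀ i, (m i : ℝ) / 2 ^ k < x i ∧ x i < ((m i : ℝ) + 1) / 2 ^ k}

/-- Half-open dyadic cube `Q̃^n_{k,m}`. -/
def dyadicCubeHalf (n k : ℕ) (m : Fin n → ℤ) : Set (Rn n) :=
  {x | ∀ i, (m i : ℝ) / 2 ^ k ≤ x i ∧ x i < ((m i : ℝ) + 1) / 2 ^ k}

def dyadicCenter (n k : ℕ) (m : Fin n → ℤ) : Rn n := fun i => ((m i : ℝ) + 1 / 2) / 2 ^ k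

/-- The concentric dilate `c·Q^n_{k,m}` of a dyadic cube. -/
def dilatedCube (n k : ℕ) (m : Fin n → ℤ) (c : ℝ) : Set (Rn n) :=
  openCube (dyadicCenter n k m) (c / 2 ^ (k + 1))

def euclNorm {d : ℕ} (y : Rn d) : ℝ := Real.sqrt (∑ i, y i ^ 2)

/-- The difference `Δ^l(h)g(x)`. -/
def diffl {n : ℕ} (l : ℕ) (h : Rn n) (g : Rn n → ℝ) (x : Rn n) : ℝ :=
  ∑ j ∈ Finset.range (l + 1), ((l.choose j : ℝ) * (-1 : ℝ) ^ (l + j)) * g (x + (j : ℝ) • h)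

/-- The difference `Δ^l(h,Ω)g(x)`, vanishing unless the segment `[x, x + l·h]` lies in `Ω`. -/
def difflOn {n : ℕ} (l : ℕ) (Ω : Set (Rn n)) (h : Rn n) (g : Rn n → ℝ) (x : Rn n) : ℝ :=
  if ∀ τ ∈ Set.Icc (0 : ℝ) 1, x + (τ * l) • h ∈ Ω then diffl l h g x else 0

/-- `δ^l_r(Q)g`, where `s` is the side length of the cube `Q`. -/
def deltaE (n l : ℕ) (r : ℝ≥0∞) (s : ℝ) (Q : Set (Rn n)) (g : Rn n → ℝ) : ℝ≥0∞ :=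
  ENNReal.ofReal s ^ (-(2 * (n : ℝ)) / r.toReal) *
    eLpNorm (fun hx : Rn n × Rn n => diffl l hx.1 g hx.2) r
      ((volume.restrict (openCube (0 : Rn n) s)).prod (volume.restrict Q))

/-- `δ^l_r(Q,Ω)g`, where `s` is the side length of the cube `Q`. -/
def deltaEOn (n l : ℕ) (r : ℝ≥0∞) (s : ℝ) (Q Ω : Set (Rn n)) (g : Rn n → ℝ) : ℝ≥0∞ :=
  ENNReal.ofReal s ^ (-(2 * (n : ℝ)) / r.toReal) *
    eLpNorm (fun hx : Rn n × Rn n => difflOn l Ω hx.1 g hx.2) r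
      ((volume.restrict (openCube (0 : Rn n) s)).prod (volume.restrict Q))

/-- `Δ̄^l_r(s)g(x)`. -/
def barDelta (n l : ℕ) (r : ℝ≥0∞) (s : ℝ) (g : Rn n → ℝ) (x : Rn n) : ℝ≥0∞ :=
  ENNReal.ofReal s ^ (-(n : ℝ) / r.toReal) *
    eLpNorm (fun h : Rn n => diffl l h g x) r (volume.restrict (openCube (0 : Rn n) s))

/-- Membership in `L_r^{loc}(ℝⁿ)`. -/
def MemLrLoc (n : ℕ) (r : ℝ≥0∞) (φ : Rn n → ℝ) : Prop :=
  Measurable φ ∧ ∀ K : Set (Rn n), IsCompact K → eLpNorm φ r (volume.restrict K) < ∞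

def IsWeight {n : ℕ} (w : Rn n → ℝ) : Prop := Measurable w ∧ ∀ x, 0 < w x

/-- A `p`-admissible weight sequence. -/
def pAdmissible (n : ℕ) (p : ℝ≥0∞) (t : ℕ → Rn n → ℝ) : Prop :=
  ∀ k, IsWeight (t k) ∧ MemLrLoc n p (t k)

/-- The multiple sequence `t_{k,m} = ‖t_k‖_{L_p(Q^n_{k,m})}` associated with a weight sequence. -/
def tkm (n : ℕ) (p : ℝ≥0∞) (t : ℕ → Rn n → ℝ) (k : ℕ) (m : Fin n → ℤ) : ℝ≥0∞ :=
  eLpNorm (t k) p (volume.restrict (dyadicCube n k m))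

/-- The weight `t̄_k` built from a multiple sequence `T`. -/
def tbarOf (n : ℕ) (p : ℝ≥0∞) (T : ℕ → (Fin n → ℤ) → ℝ≥0∞) (k : ℕ) (x : Rn n) : ℝ≥0∞ :=
  (2 : ℝ≥0∞) ^ (((k * n : ℕ) : ℝ) / p.toReal) *
    ∑' m : Fin n → ℤ, (dyadicCubeHalf n k m).indicator (fun _ => T k m) x

/-- `(2^{kn} ∫_Q f^e)^{1/e}`, with the essential supremum modification for `e = ∞`. -/
def avgNorm (n k : ℕ) (e : ℝ≥0∞) (Q : Set (Rn n)) (f : Rn n → ℝ≥0∞) : ℝ≥0∞ :=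
  if e = ∞ then essSup f (volume.restrict Q)
  else ((2 : ℝ≥0∞) ^ (k * n) * ∫⁻ x in Q, f x ^ e.toReal) ^ (1 / e.toReal)

/-- Conditions (2.14)–(2.16) of the class `X^{α₃}_{α,σ,p}`, expressed for a multiple
sequence `T`. -/
def MemXseq (n : ℕ) (α₁ α₂ α₃ : ℝ) (σ₁ σ₂ p : ℝ≥0∞) (T : ℕ → (Fin n → ℤ) → ℝ≥0∞) : Prop :=
  (∃ C₁ : ℝ≥0∞, 0 < C₁ ∧ C₁ < ∞ ∧ ∀ k j : ℕ, k ≤ j → ∀ m : Fin n → ℤ,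
    avgNorm n k p (dyadicCube n k m) (tbarOf n p T k) *
      avgNorm n k σ₁ (dyadicCube n k m) (fun x => (tbarOf n p T j x)⁻¹) ≤
      C₁ * (2 : ℝ≥0∞) ^ (α₁ * ((k : ℝ) - (j : ℝ)))) ∧
  (∃ C₂ : ℝ≥0∞, 0 < C₂ ∧ C₂ < ∞ ∧ ∀ k j : ℕ, k ≤ j → ∀ m : Fin n → ℤ,
    (avgNorm n k p (dyadicCube n k m) (tbarOf n p T k))⁻¹ *
      avgNorm n k σ₂ (dyadicCube n k m) (tbarOf n p T j) ≤
      C₂ * (2 : ℝ≥0∞) ^ (α₂ * ((j : ℝ) - (k : ℝ)))) ∧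
  (∀ k : ℕ, ∀ m m' : Fin n → ℤ, (∀ i, |m i - m' i| ≤ 1) →
    0 < T k m ∧ T k m ≤ (2 : ℝ≥0∞) ^ (α₃ : ℝ) * T k m')

/-- The weighted class `X^{α₃}_{α,σ,p}` of weight sequences. -/
def MemX (n : ℕ) (α₁ α₂ α₃ : ℝ) (σ₁ σ₂ p : ℝ≥0∞) (t : ℕ → Rn n → ℝ) : Prop :=
  pAdmissible n p t ∧ MemXseq n α₁ α₂ α₃ σ₁ σ₂ p (tkm n p t)

/-- Quasinorm of `B̃^l_{p,q,r}(ℝⁿ, T)` with an `ℝ≥0∞`-valued weight sequence `T`. -/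
def tildeBnormE (n l : ℕ) (p q r : ℝ≥0∞) (T : ℕ → Rn n → ℝ≥0∞) (φ : Rn n → ℝ) : ℝ≥0∞ :=
  lqNorm q (fun k : ℕ =>
    lpNormE p volume (fun x =>
      T (k + 1) x *
        deltaE n l r ((2 : ℝ) ^ (1 - ((k : ℤ) + 1))) (openCube x ((2 : ℝ) ^ (-((k : ℤ) + 1)))) φ)) +
  lpNormE p volume (fun x => T 0 x * eLpNorm φ r (volume.restrict (openCube x 1)))

/-- Quasinorm of `B̃^l_{p,q,r}(ℝⁿ, {t_k})`. -/
def tildeBnorm (n l : ℕ) (p q r : ℝ≥0∞) (t : ℕ → Rn n → ℝ) (φ : Rn n → ℝ) : ℝ≥0∞ :=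
  tildeBnormE n l p q r (fun k x => ENNReal.ofReal (t k x)) φ

/-- Membership in `B̃^l_{p,q,r}(ℝⁿ, {t_k})`. -/
def MemTildeB (n l : ℕ) (p q r : ℝ≥0∞) (t : ℕ → Rn n → ℝ) (φ : Rn n → ℝ) : Prop :=
  MemLrLoc n r φ ∧ tildeBnorm n l p q r t φ < ∞

/-- Quasinorm of `B̄^l_{p,q,r}(ℝⁿ, {t_k})`. -/
def barBnorm (n l : ℕ) (p q r : ℝ≥0∞) (t : ℕ → Rn n → ℝ) (φ : Rn n → ℝ) : ℝ≥0∞ :=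
  lqNorm q (fun k : ℕ =>
    lpNormE p volume (fun x =>
      ENNReal.ofReal (t (k + 1) x) * barDelta n l r ((2 : ℝ) ^ (-((k : ℤ) + 1))) φ x)) +
  lpNormE p volume (fun x => ENNReal.ofReal (t 0 x) * eLpNorm φ r (volume.restrict (openCube x 1)))

/-- Membership in `B̄^l_{p,q,r}(ℝⁿ, {t_k})`. -/
def MemBarB (n l : ℕ) (p q r : ℝ≥0∞) (t : ℕ → Rn n → ℝ) (φ : Rn n → ℝ) : Prop :=
  MemLrLoc n r φ ∧ barBnorm n l p q r t φ < ∞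

/-- The class `A^{loc}_∞`. -/
def MemAlocInfty (n : ℕ) (w : Rn n → ℝ) : Prop :=
  ∃ α : ℝ, α ∈ Set.Ioo (0 : ℝ) 1 ∧ ∃ M : ℝ≥0∞, M < ∞ ∧
    ∀ (c : Rn n) (s : ℝ), 0 < s → s ≤ 1 →
      ∀ F : Set (Rn n), F ⊆ cubeAt c s → MeasurableSet F →
        ENNReal.ofReal α * volume (cubeAt c s) ≤ volume F →
        (∫⁻ x in cubeAt c s, ENNReal.ofReal (w x)) ≤ M * ∫⁻ x in F, ENNReal.ofReal (w x)

/-- The class `A^{loc}_1`. -/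
def MemAloc1 (n : ℕ) (w : Rn n → ℝ) : Prop :=
  ∃ C : ℝ≥0∞, C < ∞ ∧ ∀ (c : Rn n) (s : ℝ), 0 < s → s ≤ 1 →
    ∀ᵐ x ∂volume.restrict (cubeAt c s),
      (∫⁻ y in cubeAt c s, ENNReal.ofReal (w y)) ≤ C * volume (cubeAt c s) * ENNReal.ofReal (w x)

/-- The class `A^{loc}_{p₀}` for `p₀ > 1`. -/
def MemAlocGt (n : ℕ) (p₀ : ℝ) (w : Rn n → ℝ) : Prop :=
  ∃ C : ℝ≥0∞, C < ∞ ∧ ∀ (c : Rn n) (s : ℝ), 0 < s → s ≤ 1 →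
    ((volume (cubeAt c s))⁻¹ * ∫⁻ y in cubeAt c s, ENNReal.ofReal (w y)) *
      ((volume (cubeAt c s))⁻¹ *
        ∫⁻ y in cubeAt c s, ENNReal.ofReal (w y) ^ (-(1 : ℝ) / (p₀ - 1))) ^ (p₀ - 1) ≤ C

/-- The class `A^{loc}_{p₀}` for `p₀ ∈ [1,∞)`. -/
def MemAlocP (n : ℕ) (p₀ : ℝ) (w : Rn n → ℝ) : Prop :=
  if p₀ = 1 then MemAloc1 n w else MemAlocGt n p₀ w

/-- The class `{}^{loc}Y^{α₃}_{α₁,α₂}` of weight sequences of variable smoothness. -/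
def MemLocY (n : ℕ) (α₁ α₂ α₃ : ℝ) (s : ℕ → Rn n → ℝ) : Prop :=
  (∀ k, IsWeight (s k)) ∧
  (∃ C : ℝ, 0 < C ∧ ∀ j k : ℕ, j ≤ k → ∀ x : Rn n,
    C⁻¹ * (2 : ℝ) ^ (α₁ * ((k : ℝ) - (j : ℝ))) ≤ s k x / s j x ∧
      s k x / s j x ≤ C * (2 : ℝ) ^ (α₂ * ((k : ℝ) - (j : ℝ)))) ∧
  (∀ k : ℕ, ∀ x y : Rn n, euclNorm (x - y) ≤ (2 : ℝ) ^ (-(k : ℤ)) →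
    s k x ≤ (2 : ℝ) ^ α₃ * s k y)

/-- The set `Ξ^{d,n}_{k,m} = Q^n_{k,m} × (2^{-k}B^d ∖ 2^{-k-1}B^d) ⊂ ℝ^{n+d}`. -/
def Xi (n d k : ℕ) (m : Fin n → ℤ) : Set (Rn (n + d)) :=
  {z | (fun i => z (Fin.castAdd d i)) ∈ dyadicCube n k m ∧
       euclNorm (fun i : Fin d => z (Fin.natAdd n i)) < (2 : ℝ) ^ (-(k : ℤ)) ∧
       (2 : ℝ) ^ (-(k : ℤ) - 1) ≤ euclNorm (fun i : Fin d => z (Fin.natAdd n i))}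

/-- The multiple sequence `γ̂_{k,m} = ‖γ‖_{L_p(Ξ^{d,n}_{k,m})}` generated by a weight `γ`. -/
def gammaHat (n d : ℕ) (p : ℝ≥0∞) (γ : Rn (n + d) → ℝ) (k : ℕ) (m : Fin n → ℤ) : ℝ≥0∞ :=
  eLpNorm γ p (volume.restrict (Xi n d k m))

def delta1Good (n d : ℕ) (p : ℝ≥0∞) (γ : Rn (n + d) → ℝ) (δ : ℝ) : Prop :=
  ∃ C : ℝ≥0∞, C < ∞ ∧ ∀ k j : ℕ, k ≤ j → ∀ m : Fin n → ℤ,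
    (∑' m' : {m' : Fin n → ℤ // dyadicCube n j m' ⊆ dyadicCube n k m},
        gammaHat n d p γ j m'.1 ^ p.toReal) ≤
      C * (2 : ℝ≥0∞) ^ ((((k : ℝ) - (j : ℝ)) * (d : ℝ)) * δ) * gammaHat n d p γ k m ^ p.toReal

/-- `δ₁(γ,n,d)`. -/
def delta1 (n d : ℕ) (p : ℝ≥0∞) (γ : Rn (n + d) → ℝ) : ℝ :=
  sSup {δ : ℝ | 0 < δ ∧ delta1Good n d p γ δ}

def delta2Good (n d : ℕ) (p : ℝ≥0∞) (γ : Rn (n + d) → ℝ) (δ : ℝ) : Prop :=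
  ∃ C : ℝ≥0∞, C < ∞ ∧ ∀ k j : ℕ, k ≤ j → ∀ m : Fin n → ℤ,
    ∀ G : Set (Fin n → ℤ), (∀ m' ∈ G, dyadicCube n j m' ⊆ dyadicCube n k m) →
      (∑' m' : G, gammaHat n d p γ j m'.1 ^ p.toReal) ≤
        C * (volume (⋃ m' ∈ G, dyadicCube n j m') / volume (dyadicCube n k m)) ^ δ *
          ∑' m' : {m' : Fin n → ℤ // dyadicCube n j m' ⊆ dyadicCube n k m},
            gammaHat n d p γ j m'.1 ^ p.toReal

/-- `δ₂(γ,n,d)`. -/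
def delta2 (n d : ℕ) (p : ℝ≥0∞) (γ : Rn (n + d) → ℝ) : ℝ :=
  sSup {δ : ℝ | 0 < δ ∧ delta2Good n d p γ δ}

/-- The cardinal B-spline of degree `deg` with knots `0, 1, …, deg + 1`. -/
def cardB : ℕ → ℝ → ℝ
  | 0, x => if 0 ≤ x ∧ x < 1 then 1 else 0
  | (d + 1), x => (x / (d + 1)) * cardB d x + (((d : ℝ) + 2 - x) / (d + 1)) * cardB d (x - 1)

/-- The tensor-product B-spline `N^{deg}_{k,m}` on `ℝⁿ`. -/
def Bspl (n deg k : ℕ) (m : Fin n → ℤ) (x : Rn n) : ℝ :=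
  ∏ i, cardB deg (2 ^ k * x i - (m i : ℝ))

/-- The spline `Σ_m β_m N^{deg}_{k,m}`. -/
def splineSum (n deg k : ℕ) (β : (Fin n → ℤ) → ℝ) (x : Rn n) : ℝ :=
  ∑' m, β m * Bspl n deg k m x

/-- A dyadic spline of degree `deg` (an element of `Σ^{deg} = ⋃_k Σ^{deg}_k`). -/
def IsSplineFn (n deg : ℕ) (S : Rn n → ℝ) : Prop :=
  ∃ (k : ℕ) (β : (Fin n → ℤ) → ℝ), S = splineSum n deg k β

/-- The weighted best spline approximation `s_k(φ)` by splines of degree `deg`. -/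
def sApprox (n deg : ℕ) (p r : ℝ≥0∞) (T : ℕ → (Fin n → ℤ) → ℝ≥0∞) (φ : Rn n → ℝ) (k : ℕ) :
    ℝ≥0∞ :=
  ⨅ β : (Fin n → ℤ) → ℝ,
    lqNorm p (fun m => T k m *
      eLpNorm (fun x => φ x - splineSum n deg k β x) r (volume.restrict (dyadicCube n k m)))

/-- `s_j(φ)` for `j ∈ {-1, 0, 1, 2, …}`, including the term `s_{-1}`. -/
def sApproxZ (n deg : ℕ) (p r : ℝ≥0∞) (T : ℕ → (Fin n → ℤ) → ℝ≥0∞) (φ : Rn n → ℝ) (j : ℤ) :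
    ℝ≥0∞ :=
  if j < 0 then
    lqNorm p (fun m => T 0 m * eLpNorm φ r (volume.restrict (dyadicCube n 0 m)))
  else sApprox n deg p r T φ j.toNat

/-- Local best polynomial approximation `E_l(φ,Q)_r` by polynomials of total degree `< l`. -/
def bestApproxE (n l : ℕ) (r : ℝ≥0∞) (φ : Rn n → ℝ) (Q : Set (Rn n)) : ℝ≥0∞ :=
  ⨅ P : {P : MvPolynomial (Fin n) ℝ // P.totalDegree < l},
    eLpNorm (fun x => φ x - MvPolynomial.eval x P.1) r (volume.restrict Q)

/-- The modulus of continuity `ω_l(φ,Q)_r`. -/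
def modulusE (n l : ℕ) (r : ℝ≥0∞) (φ : Rn n → ℝ) (Q : Set (Rn n)) : ℝ≥0∞ :=
  ⨆ h : Rn n, eLpNorm (difflOn l Q h φ) r (volume : Measure (Rn n))

def partialDeriv {N : ℕ} (i : Fin N) (ψ : Rn N → ℝ) : Rn N → ℝ :=
  fun x => fderiv ℝ ψ x (Pi.single i 1)

def iterPD {N : ℕ} : List (Fin N) → (Rn N → ℝ) → Rn N → ℝ
  | [], ψ => ψ
  | i :: L, ψ => partialDeriv i (iterPD L ψ)

def multiIdxList {N : ℕ} (α : Fin N → ℕ) : List (Fin N) :=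
  (List.finRange N).foldr (fun i L => List.replicate (α i) i ++ L) []

/-- Iterated partial derivative `D^α`. -/
def multiDeriv {N : ℕ} (α : Fin N → ℕ) (ψ : Rn N → ℝ) : Rn N → ℝ :=
  iterPD (multiIdxList α) ψ

/-- `g` is the weak (Sobolev) derivative `D^α f`. -/
def IsWeakDeriv {N : ℕ} (α : Fin N → ℕ) (f g : Rn N → ℝ) : Prop :=
  ∀ ψ : Rn N → ℝ, ContDiff ℝ (⊤ : ℕ∞) ψ → HasCompactSupport ψ →
    ∫ x, f x * multiDeriv α ψ x = (-1 : ℝ) ^ (∑ i, α i) * ∫ x, g x * ψ x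

/-- The weighted Sobolev norm `Σ_{|α| ≤ l} ‖γ · D^α f‖_{L_p}` computed from a system `D` of
weak derivatives. -/
def sobNorm (N : ℕ) (p : ℝ≥0∞) (l : ℕ) (γ : Rn N → ℝ) (D : (Fin N → ℕ) → Rn N → ℝ) : ℝ≥0∞ :=
  ∑' α : Fin N → ℕ,
    if (∑ i, α i) ≤ l then eLpNorm (fun x => γ x * D α x) p volume else 0

/-- Membership in the weighted Sobolev space `W^l_p(ℝ^N, γ)`, witnessed by the system `D`
of weak derivatives of `f`. -/
def MemW (N : ℕ) (p : ℝ≥0∞) (l : ℕ) (γ : Rn N → ℝ) (f : Rn N → ℝ)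
    (D : (Fin N → ℕ) → Rn N → ℝ) : Prop :=
  MeasureTheory.LocallyIntegrable f volume ∧ D 0 = f ∧
    (∀ α : Fin N → ℕ, (∑ i, α i) ≤ l →
      MeasureTheory.LocallyIntegrable (D α) volume ∧ IsWeakDeriv α f (D α)) ∧
    sobNorm N p l γ D < ∞

/-- `φ` is the trace of `f` on the plane `y = 0`. -/
def IsTraceSob {n d : ℕ} (f : Rn (n + d) → ℝ) (φ : Rn n → ℝ) : Prop :=
  ∃ f' : Rn (n + d) → ℝ, f' =ᵐ[volume] f ∧
    ∀ (c : Rn n) (s : ℝ), 0 < s →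
      Filter.Tendsto (fun y : Rn d => ∫ x in cubeAt c s, |f' (Fin.append x y) - φ x|)
        (nhds 0) (nhds 0)

/-- The weight sequence `γ_k(x) = 2^{k(l+n/p)} Σ_m χ_{Q̃^n_{k,m}}(x) γ̂_{k,m}`. -/
def gammaSeq (n d : ℕ) (p : ℝ≥0∞) (l : ℕ) (γ : Rn (n + d) → ℝ) (k : ℕ) (x : Rn n) : ℝ≥0∞ :=
  (2 : ℝ≥0∞) ^ ((k : ℝ) * ((l : ℝ) + (n : ℝ) / p.toReal)) *
    ∑' m : Fin n → ℤ, (dyadicCubeHalf n k m).indicator (fun _ => gammaHat n d p γ k m) x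

/-- Conjugate exponent in `ℝ≥0∞`. -/
def conjE (e : ℝ≥0∞) : ℝ≥0∞ := (1 - e⁻¹)⁻¹

/-- The exponent `p_θ`. -/
def pTheta (p θ : ℝ≥0∞) : ℝ≥0∞ := if θ = ∞ ∧ p = ∞ then 1 else p / θ

/-!
Both quasi-norms are `ℓ_q(L_p)` norms, with weights `W_k = t_k ^ p`, of means at scale `2 ^ (-k)`
of powers of `|Δ^l(h) φ(x)|`: over `h` alone for `B̄`, over `h` and `x` for `B̃`. The Muckenhoupt
condition on `γ ^ p` and the slow variation of `s_k` at scale `2 ^ (-k)` make the averaging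
operators over balls of radius comparable to `2 ^ (-k)` bounded on `L_{p / r₂}(W_k)` uniformly in
`k`.

The comparison of the means rests on one identity: the alternating sums over `j = 0, …, l` of
`Δ^l(h + j v) φ(y + j u)` and of `Δ^l(u + j v) φ(y + j h)` coincide.

For `v = 0` it bounds the pointwise mean at one scale by `1 + δ` times the pointwise mean at the
next scale plus an averaged mean. Iterating this bounds a pointwise mean by the averaged means at
all finer scales. Since the weights grow at least like `2 ^ (p α₁ k)`, a small `δ` is harmless and
Hardy's inequality sums the result.

Averaging over `v` as well bounds a single difference at `x` by pointwise means around `x` at a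
larger scale. This raises the exponent from `r₁` to `r₂` at the cost of finitely many initial
terms, which are controlled by the norm of `φ` in `L_p(W_0)`.
-/

/-! ### Inequalities in `[0, ∞]` -/

lemma rpow_lintegral_le {α : Type*} [MeasurableSpace α] (μ : Measure α) [IsProbabilityMeasure μ]
    {s : ℝ} (hs : 1 ≤ s) {f : α → ℝ≥0∞} (hf : AEMeasurable f μ) :
    (∫⁻ x, f x ∂μ) ^ s ≤ ∫⁻ x, f x ^ s ∂μ := by
  have h := eLpNorm'_le_eLpNorm'_of_exponent_le one_pos hs μ hf.aestronglyMeasurable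
  simp only [eLpNorm', enorm_eq_self, rpow_one, div_one] at h
  rwa [one_div, ENNReal.le_rpow_inv_iff (one_pos.trans_le hs)] at h

lemma sum_rpow_le_card_rpow_mul {ι : Type*} (s : Finset ι) (z : ι → ℝ≥0∞) {e : ℝ} (he : 0 < e) :
    (∑ i ∈ s, z i) ^ e ≤ (s.card : ℝ≥0∞) ^ e * ∑ i ∈ s, z i ^ e := by
  rcases s.eq_empty_or_nonempty with rfl | hs
  · simp [he]
  obtain ⟨j, hj, hmax⟩ := s.exists_max_image z hs
  calc (∑ i ∈ s, z i) ^ e ≤ (s.card * z j) ^ e := by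
        gcongr
        simpa using s.sum_le_card_nsmul z (z j) hmax
    _ = (s.card : ℝ≥0∞) ^ e * z j ^ e := ENNReal.mul_rpow_of_nonneg _ _ he.le
    _ ≤ (s.card : ℝ≥0∞) ^ e * ∑ i ∈ s, z i ^ e := by
        gcongr
        exact Finset.single_le_sum (f := fun i => z i ^ e) (fun _ _ => zero_le) hj

lemma add_rpow_le_two_rpow_mul (x y : ℝ≥0∞) {e : ℝ} (he : 0 < e) :
    (x + y) ^ e ≤ 2 ^ e * (x ^ e + y ^ e) := by
  simpa using sum_rpow_le_card_rpow_mul Finset.univ ![x, y] he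

lemma add_rpow_le_one_add_rpow_mul (x y : ℝ≥0∞) {e : ℝ} (he : 0 < e) {δ : ℝ≥0∞} (hδ : δ ≠ 0)
    (hδ' : δ ≠ ∞) : (x + y) ^ e ≤ (1 + δ) ^ e * x ^ e + (1 + δ⁻¹) ^ e * y ^ e := by
  rw [← ENNReal.mul_rpow_of_nonneg _ _ he.le, ← ENNReal.mul_rpow_of_nonneg _ _ he.le]
  rcases le_total y (δ * x) with h | h
  · refine le_add_right ?_
    gcongr
    rw [add_mul, one_mul]
    gcongr
  · refine le_add_left ?_
    gcongr
    rw [add_mul, one_mul, add_comm, mul_comm, ← div_eq_mul_inv]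
    gcongr
    exact (ENNReal.le_div_iff_mul_le (.inl hδ) (.inl hδ')).2 (mul_comm δ x ▸ h)

lemma tsum_two_rpow_neg_mul_ne_top {θ : ℝ} (hθ : 0 < θ) :
    ∑' i : ℕ, (2 : ℝ≥0∞) ^ (-(θ * i)) ≠ ∞ := by
  have hgeom : ∀ i : ℕ, (2 : ℝ≥0∞) ^ (-(θ * i)) = ((2 : ℝ≥0∞) ^ (-θ)) ^ i := fun i => by
    rw [← ENNReal.rpow_natCast, ← ENNReal.rpow_mul, neg_mul]
  have hlt : (2 : ℝ≥0∞) ^ (-θ) < 1 :=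
    ENNReal.rpow_lt_one_of_one_lt_of_neg one_lt_two (neg_lt_zero.2 hθ)
  simp [hgeom, ENNReal.tsum_geometric, tsub_eq_zero_iff_le, hlt]

lemma exists_tsum_rpow_le {θ s : ℝ} (hθ : 0 < θ) (hs : 0 < s) :
    ∃ C : ℝ≥0∞, C ≠ ∞ ∧ ∀ y : ℕ → ℝ≥0∞,
      (∑' i, y i) ^ s ≤ C * ∑' i : ℕ, 2 ^ (θ * i) * y i ^ s := by
  have hgeom := tsum_two_rpow_neg_mul_ne_top (div_pos hθ hs)
  refine ⟨(∑' i : ℕ, (2 : ℝ≥0∞) ^ (-(θ / s * i))) ^ s, by finiteness, fun y => ?_⟩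
  set T := ∑' i : ℕ, (2 : ℝ≥0∞) ^ (θ * i) * y i ^ s
  have hy : ∀ i, y i ≤ 2 ^ (-(θ / s * i)) * T ^ s⁻¹ := fun i => by
    have h : y i * 2 ^ (θ / s * i) ≤ T ^ s⁻¹ := by
      rw [ENNReal.le_rpow_inv_iff hs, ENNReal.mul_rpow_of_nonneg _ _ hs.le, ← ENNReal.rpow_mul,
        mul_comm, mul_right_comm, div_mul_cancel₀ _ hs.ne']
      exact ENNReal.le_tsum (f := fun i : ℕ => (2 : ℝ≥0∞) ^ (θ * i) * y i ^ s) i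
    rw [ENNReal.rpow_neg, mul_comm, ← div_eq_mul_inv]
    exact (ENNReal.le_div_iff_mul_le (.inl (by simp)) (.inl (by finiteness))).2 h
  calc (∑' i, y i) ^ s ≤ (∑' i : ℕ, 2 ^ (-(θ / s * i)) * T ^ s⁻¹) ^ s := by
        gcongr with i
        exact hy i
    _ = _ := by
        rw [ENNReal.tsum_mul_right, ENNReal.mul_rpow_of_nonneg _ _ hs.le,
          ENNReal.rpow_inv_rpow hs.ne']

/-! ### Averages over balls -/

section BallAverages

variable {E : Type*} [NormedAddCommGroup E] [MeasureSpace E]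

variable (E) in
/-- Normalised Lebesgue measure on the ball of radius `ρ` about the origin; on `Rn n`, whose norm
is the sup norm, this ball is the cube `ρ Iⁿ`. -/
def ballProb (ρ : ℝ) : Measure E := ProbabilityTheory.cond volume (Metric.ball 0 ρ)

/-- The average of `f` over the ball of radius `ρ` about `x`. -/
def ballAvg (ρ : ℝ) (f : E → ℝ≥0∞) (x : E) : ℝ≥0∞ := ∫⁻ h, f (x + h) ∂ballProb E ρ

instance sFinite_ballProb (ρ : ℝ) : SFinite (ballProb E ρ) :=
  inferInstanceAs (SFinite (ProbabilityTheory.cond _ _))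

lemma lintegral_ballProb (ρ : ℝ) (f : E → ℝ≥0∞) :
    ∫⁻ h, f h ∂ballProb E ρ =
      (volume (Metric.ball (0 : E) ρ))⁻¹ * ∫⁻ h in Metric.ball 0 ρ, f h := by
  rw [ballProb, ProbabilityTheory.cond, lintegral_smul_measure, smul_eq_mul]

lemma ballAvg_mono (ρ : ℝ) {f g : E → ℝ≥0∞} (h : f ≤ g) : ballAvg ρ f ≤ ballAvg ρ g :=
  fun _ => lintegral_mono fun _ => h _

lemma isProbabilityMeasure_ballProb [NormedSpace ℝ E] [FiniteDimensional ℝ E]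
    [(volume : Measure E).IsAddHaarMeasure] {ρ : ℝ} (hρ : 0 < ρ) :
    IsProbabilityMeasure (ballProb E ρ) :=
  ProbabilityTheory.cond_isProbabilityMeasure_of_finite (Metric.measure_ball_pos volume 0 hρ).ne'
    measure_ball_lt_top.ne

variable [BorelSpace E]

lemma ae_norm_lt_ballProb (ρ : ℝ) : ∀ᵐ h ∂ballProb E ρ, ‖h‖ < ρ := by
  filter_upwards [ProbabilityTheory.ae_cond_mem (μ := volume) measurableSet_ball] with h hh
  exact mem_ball_zero_iff.1 hh

lemma ballAvg_const_mul (ρ : ℝ) (c : ℝ≥0∞) {f : E → ℝ≥0∞} (hf : Measurable f) (x : E) :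
    ballAvg ρ (fun y => c * f y) x = c * ballAvg ρ f x :=
  lintegral_const_mul c (by fun_prop)

lemma ballAvg_eq [(volume : Measure E).IsAddHaarMeasure] (ρ : ℝ) (f : E → ℝ≥0∞) (x : E) :
    ballAvg ρ f x = (volume (Metric.ball x ρ))⁻¹ * ∫⁻ y in Metric.ball x ρ, f y := by
  have hpre : (x + ·) ⁻¹' Metric.ball x ρ = Metric.ball 0 ρ := by simp [preimage_add_ball]
  rw [ballAvg, lintegral_ballProb, Measure.addHaar_ball_center volume x, ← hpre,
    (measurePreserving_add_left volume x).setLIntegral_comp_preimage_emb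
      (measurableEmbedding_addLeft x)]

variable [NormedSpace ℝ E] [FiniteDimensional ℝ E]

@[fun_prop]
lemma measurable_ballAvg (ρ : ℝ) {f : E → ℝ≥0∞} (hf : Measurable f) : Measurable (ballAvg ρ f) := by
  unfold ballAvg
  fun_prop

variable [(volume : Measure E).IsAddHaarMeasure]

lemma ballAvg_rpow_le {s : ℝ} (hs : 1 ≤ s) {ρ : ℝ} (hρ : 0 < ρ) {f : E → ℝ≥0∞}
    (hf : Measurable f) (x : E) : ballAvg ρ f x ^ s ≤ ballAvg ρ (fun y => f y ^ s) x :=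
  have := isProbabilityMeasure_ballProb (E := E) hρ
  rpow_lintegral_le _ hs (by fun_prop)

lemma lintegral_ballAvg {ρ : ℝ} (hρ : 0 < ρ) {f : E → ℝ≥0∞} (hf : Measurable f) :
    ∫⁻ x, ballAvg ρ f x = ∫⁻ x, f x := by
  have := isProbabilityMeasure_ballProb (E := E) hρ
  unfold ballAvg
  rw [lintegral_lintegral_swap (by fun_prop)]
  simp [lintegral_add_right_eq_self f]

lemma lintegral_ballProb_smul {c : ℝ} (hc : 0 < c) (ρ : ℝ) {f : E → ℝ≥0∞}
    (hf : Measurable f) (x : E) :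
    ∫⁻ h, f (x + c • h) ∂ballProb E ρ = ballAvg (c * ρ) f x := by
  have hpre : (c • · : E → E) ⁻¹' Metric.ball 0 (c * ρ) = Metric.ball 0 ρ := by
    ext h
    simp [norm_smul, abs_of_pos hc, hc]
  have hc' : ENNReal.ofReal (c ^ Module.finrank ℝ E) ≠ 0 := by
    simpa using pow_pos hc (Module.finrank ℝ E)
  rw [ballAvg, lintegral_ballProb, lintegral_ballProb, ← hpre,
    ← setLIntegral_map (f := fun h => f (x + h)) measurableSet_ball (by fun_prop) (by fun_prop),
    hpre, Measure.map_addHaar_smul _ hc.ne', abs_of_pos (by positivity), Measure.restrict_smul,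
    lintegral_smul_measure, smul_eq_mul, ← mul_assoc, Measure.addHaar_ball_mul_of_pos _ _ hc,
    ENNReal.mul_inv (.inl hc') (.inl ENNReal.ofReal_ne_top),
    ENNReal.ofReal_inv_of_pos (by positivity), mul_comm (_⁻¹) (_⁻¹)]

lemma inv_volume_ball_le {ρ σ K : ℝ} (hρ : 0 < ρ) (hσ : 0 < σ) (hK : σ ≤ K * ρ) (x y : E) :
    (volume (Metric.ball y ρ))⁻¹ ≤
      ENNReal.ofReal K ^ Module.finrank ℝ E * (volume (Metric.ball x σ))⁻¹ := by
  have hK0 : 0 < K := pos_of_mul_pos_left (hσ.trans_le hK) hρ.le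
  have hvol : volume (Metric.ball x σ) ≤
      ENNReal.ofReal K ^ Module.finrank ℝ E * volume (Metric.ball y ρ) := by
    rw [← ENNReal.ofReal_pow hK0.le, Measure.addHaar_ball_center volume y,
      ← Measure.addHaar_ball_mul_of_pos volume x hK0]
    exact measure_mono (Metric.ball_subset_ball hK)
  rw [← div_eq_mul_inv,
    ENNReal.le_div_iff_mul_le (.inl (Metric.measure_ball_pos volume x hσ).ne')
      (.inl measure_ball_lt_top.ne), mul_comm, ← div_eq_mul_inv]
  exact ENNReal.div_le_of_le_mul hvol

lemma ballAvg_le_of_dist_add_le {ρ σ K : ℝ} (hρ : 0 < ρ) {x y : E} (hxy : dist y x + ρ ≤ σ)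
    (hK : σ ≤ K * ρ) (f : E → ℝ≥0∞) :
    ballAvg ρ f y ≤ ENNReal.ofReal K ^ Module.finrank ℝ E * ballAvg σ f x := by
  have hσ : 0 < σ := by linarith [dist_nonneg (x := y) (y := x)]
  rw [ballAvg_eq, ballAvg_eq, ← mul_assoc]
  gcongr
  · exact inv_volume_ball_le hρ hσ hK x y
  · exact Metric.ball_subset_ball' (by linarith)

lemma ballAvg_le_of_le {ρ σ K : ℝ} (hρ : 0 < ρ) (hρσ : ρ ≤ σ) (hK : σ ≤ K * ρ) (f : E → ℝ≥0∞)
    (x : E) : ballAvg ρ f x ≤ ENNReal.ofReal K ^ Module.finrank ℝ E * ballAvg σ f x :=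
  ballAvg_le_of_dist_add_le hρ (by simpa using hρσ) hK f

lemma exists_ball_subset_inter_ball {F : Type*} [SeminormedAddCommGroup F] [NormedSpace ℝ F]
    {R τ ρ₁ ρ₂ : ℝ} (h₁ : τ ≤ ρ₁) (h₂ : τ ≤ ρ₂) (hR : R + 2 * τ ≤ ρ₁ + ρ₂) {x w : F}
    (hw : dist w x < R) : ∃ c, Metric.ball c τ ⊆ Metric.ball w ρ₂ ∩ Metric.ball x ρ₁ := by
  obtain ⟨c, hwc, hcx⟩ := exists_dist_le_le (x := w) (z := x) (sub_nonneg.2 h₂) (sub_nonneg.2 h₁)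
    (by linarith)
  exact ⟨c, Set.subset_inter (Metric.ball_subset_ball' (by linarith [dist_comm c w]))
    (Metric.ball_subset_ball' (by linarith))⟩

lemma volume_ball_mul_setLIntegral_le {R τ ρ₁ ρ₂ : ℝ} (h₁ : τ ≤ ρ₁) (h₂ : τ ≤ ρ₂)
    (hR : R + 2 * τ ≤ ρ₁ + ρ₂) {f : E → ℝ≥0∞} (hf : Measurable f) (x : E) :
    volume (Metric.ball x τ) * ∫⁻ w in Metric.ball x R, f w ≤
      ∫⁻ y in Metric.ball x ρ₁, ∫⁻ w in Metric.ball y ρ₂, f w := by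
  have hmeas : Measurable fun p : E × E => (Metric.ball p.2 ρ₂).indicator (fun _ => f p.2) p.1 :=
    (hf.comp measurable_snd).indicator (measurableSet_lt (by fun_prop) measurable_const)
  have hflip : ∀ y, ∫⁻ w in Metric.ball y ρ₂, f w =
      ∫⁻ w, (Metric.ball w ρ₂).indicator (fun _ => f w) y := fun y => by
    rw [← lintegral_indicator measurableSet_ball]
    exact lintegral_congr fun w => by simp only [Set.indicator_apply, Metric.mem_ball, dist_comm]
  have hfubini : ∫⁻ y in Metric.ball x ρ₁, ∫⁻ w in Metric.ball y ρ₂, f w =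
      ∫⁻ w, f w * volume (Metric.ball w ρ₂ ∩ Metric.ball x ρ₁) := by
    simp_rw [hflip]
    rw [lintegral_lintegral_swap hmeas.aemeasurable]
    refine lintegral_congr fun w => ?_
    rw [lintegral_indicator_const measurableSet_ball, Measure.restrict_apply measurableSet_ball]
  rw [hfubini, mul_comm, ← lintegral_mul_const _ hf]
  refine (setLIntegral_mono' measurableSet_ball fun w hw => ?_).trans
    (setLIntegral_le_lintegral _ _)
  obtain ⟨c, hc⟩ := exists_ball_subset_inter_ball h₁ h₂ hR hw
  refine mul_le_mul_right ?_ (f w)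
  rw [Measure.addHaar_ball_center volume x, ← Measure.addHaar_ball_center volume c]
  exact measure_mono hc

lemma ballAvg_le_ballAvg_ballAvg {R τ ρ₁ ρ₂ K L : ℝ} (hR : 0 < R) (hτ : 0 < τ) (h₁ : τ ≤ ρ₁)
    (h₂ : τ ≤ ρ₂) (h : R + 2 * τ ≤ ρ₁ + ρ₂) (hK : ρ₁ ≤ K * R) (hL : ρ₂ ≤ L * τ)
    {f : E → ℝ≥0∞} (hf : Measurable f) (x : E) :
    ballAvg R f x ≤ ENNReal.ofReal K ^ Module.finrank ℝ E * ENNReal.ofReal L ^ Module.finrank ℝ E *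
      ballAvg ρ₁ (ballAvg ρ₂ f) x := by
  have hVτ : volume (Metric.ball x τ) ≠ 0 := (Metric.measure_ball_pos volume x hτ).ne'
  have hiter : ballAvg ρ₁ (ballAvg ρ₂ f) x = (volume (Metric.ball x ρ₁))⁻¹ *
      ((volume (Metric.ball x ρ₂))⁻¹ *
        ∫⁻ y in Metric.ball x ρ₁, ∫⁻ w in Metric.ball y ρ₂, f w) := by
    rw [ballAvg_eq, ← lintegral_const_mul' _ _ (ENNReal.inv_ne_top.2
      (Metric.measure_ball_pos volume x (hτ.trans_le h₂)).ne')]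
    simp only [ballAvg_eq ρ₂ f, Measure.addHaar_ball_center volume _ ρ₂]
  calc ballAvg R f x
      = (volume (Metric.ball x R))⁻¹ * ((volume (Metric.ball x τ))⁻¹ *
          (volume (Metric.ball x τ) * ∫⁻ w in Metric.ball x R, f w)) := by
        rw [ENNReal.inv_mul_cancel_left hVτ measure_ball_lt_top.ne, ballAvg_eq]
    _ ≤ (ENNReal.ofReal K ^ Module.finrank ℝ E * (volume (Metric.ball x ρ₁))⁻¹) *
          ((ENNReal.ofReal L ^ Module.finrank ℝ E * (volume (Metric.ball x ρ₂))⁻¹) *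
            ∫⁻ y in Metric.ball x ρ₁, ∫⁻ w in Metric.ball y ρ₂, f w) := by
        gcongr
        · exact inv_volume_ball_le hR (hτ.trans_le h₁) hK x x
        · exact inv_volume_ball_le hτ (hτ.trans_le h₂) hL x x
        · exact volume_ball_mul_setLIntegral_le h₁ h₂ h hf x
    _ = _ := by rw [hiter]; ring

end BallAverages

/-! ### Weighted spaces and the averaging operator -/

/-- The `P`-th power of the quasinorm of `f` in `L_P` with respect to the density `W`. -/
def lpPow {α : Type*} [MeasureSpace α] (W : α → ℝ≥0∞) (P : ℝ) (f : α → ℝ≥0∞) : ℝ≥0∞ :=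
  ∫⁻ x, W x * f x ^ P

section LpPow

variable {α : Type*} [MeasureSpace α] {W V : α → ℝ≥0∞} {P : ℝ} {f g : α → ℝ≥0∞} {c : ℝ≥0∞}

lemma lpPow_le_of_ae_le (hP : 0 ≤ P) (hc : c ≠ ∞) (h : ∀ᵐ x, f x ≤ c * g x) :
    lpPow W P f ≤ c ^ P * lpPow W P g := by
  unfold lpPow
  rw [← lintegral_const_mul' _ _ (by finiteness)]
  refine lintegral_mono_ae (h.mono fun x hx => ?_)
  calc W x * f x ^ P ≤ W x * (c * g x) ^ P := by gcongr
    _ = c ^ P * (W x * g x ^ P) := by rw [ENNReal.mul_rpow_of_nonneg _ _ hP]; ring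

lemma lpPow_le_of_le (hP : 0 ≤ P) (hc : c ≠ ∞) (h : ∀ x, f x ≤ c * g x) :
    lpPow W P f ≤ c ^ P * lpPow W P g :=
  lpPow_le_of_ae_le hP hc (.of_forall h)

lemma lpPow_le_of_weight_le (hc : c ≠ ∞) (h : ∀ x, W x ≤ c * V x) :
    lpPow W P f ≤ c * lpPow V P f := by
  unfold lpPow
  rw [← lintegral_const_mul' _ _ hc]
  refine lintegral_mono fun x => ?_
  rw [← mul_assoc]
  gcongr
  exact h x

lemma lpPow_add_le (hP : 0 < P) (hW : Measurable W) (hf : Measurable f) (g : α → ℝ≥0∞) :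
    lpPow W P (fun x => f x + g x) ≤ 2 ^ P * (lpPow W P f + lpPow W P g) := by
  unfold lpPow
  rw [← lintegral_add_left (by fun_prop), ← lintegral_const_mul' _ _ (by finiteness)]
  refine lintegral_mono fun x => ?_
  calc W x * (f x + g x) ^ P ≤ W x * (2 ^ P * (f x ^ P + g x ^ P)) := by
        gcongr
        exact add_rpow_le_two_rpow_mul _ _ hP
    _ = 2 ^ P * (W x * f x ^ P + W x * g x ^ P) := by ring

lemma exists_lpPow_tsum_le (hP : 0 < P) {θ : ℝ} (hθ : 0 < θ) :
    ∃ C : ℝ≥0∞, C ≠ ∞ ∧ ∀ {W : α → ℝ≥0∞} {G : ℕ → α → ℝ≥0∞}, Measurable W →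
      (∀ i, Measurable (G i)) →
      lpPow W P (fun x => ∑' i, G i x) ≤ C * ∑' i : ℕ, 2 ^ (θ * i) * lpPow W P (G i) := by
  obtain ⟨C, hC, h⟩ := exists_tsum_rpow_le hθ hP
  refine ⟨C, hC, fun {W G} hW hG => ?_⟩
  unfold lpPow
  have hconst : ∀ i : ℕ, (2 : ℝ≥0∞) ^ (θ * i) ≠ ∞ := fun i => by finiteness
  simp_rw [← lintegral_const_mul' _ _ (hconst _)]
  rw [← lintegral_tsum (by fun_prop), ← lintegral_const_mul' _ _ hC]
  refine lintegral_mono fun x => ?_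
  calc W x * (∑' i, G i x) ^ P ≤ W x * (C * ∑' i : ℕ, 2 ^ (θ * i) * G i x ^ P) := by
        gcongr
        exact h _
    _ = C * ∑' i : ℕ, 2 ^ (θ * i) * (W x * G i x ^ P) := by
        simp only [mul_left_comm _ (W x), ENNReal.tsum_mul_left]

end LpPow

section Muckenhoupt

variable {E : Type*} [NormedAddCommGroup E] [MeasureSpace E]

/-- The Muckenhoupt `A_P` condition for the weight `W` on balls of radius `ρ`, in the form obtained
by testing against functions; it makes sense for `P < 1` as well, and is inherited by larger `P`. -/
def TestedMuckenhoupt (W : E → ℝ≥0∞) (P ρ : ℝ) (K : ℝ≥0∞) : Prop :=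
  ∀ f : E → ℝ≥0∞, Measurable f → ∀ z,
    ballAvg ρ W z * ballAvg ρ f z ^ P ≤ K * ballAvg ρ (fun x => W x * f x ^ P) z

/-- Boundedness of the average over balls of radius `ρ` on `L_P(W)`. -/
def BallAvgBounded (W : E → ℝ≥0∞) (P ρ : ℝ) (K : ℝ≥0∞) : Prop :=
  ∀ f : E → ℝ≥0∞, Measurable f → lpPow W P (ballAvg ρ f) ≤ K * lpPow W P f

variable [BorelSpace E] [NormedSpace ℝ E] [FiniteDimensional ℝ E]
  [(volume : Measure E).IsAddHaarMeasure] {W : E → ℝ≥0∞} {P ρ : ℝ} {K : ℝ≥0∞}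

local notation "dim" => Module.finrank ℝ E

lemma TestedMuckenhoupt.mono_exponent {Q : ℝ} (h : TestedMuckenhoupt W P ρ K) (hP : 0 < P)
    (hPQ : P ≤ Q) (hρ : 0 < ρ) : TestedMuckenhoupt W Q ρ K := by
  intro f hf z
  have hexp : P * (Q / P) = Q := mul_div_cancel₀ _ hP.ne'
  calc ballAvg ρ W z * ballAvg ρ f z ^ Q
      = ballAvg ρ W z * (ballAvg ρ f z ^ (Q / P)) ^ P := by
        rw [← ENNReal.rpow_mul, mul_comm (Q / P), hexp]
    _ ≤ ballAvg ρ W z * ballAvg ρ (fun x => f x ^ (Q / P)) z ^ P := by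
        gcongr
        exact ballAvg_rpow_le ((one_le_div hP).2 hPQ) hρ hf z
    _ ≤ K * ballAvg ρ (fun x => W x * (f x ^ (Q / P)) ^ P) z := h _ (by fun_prop) z
    _ = K * ballAvg ρ (fun x => W x * f x ^ Q) z := by
        simp only [← ENNReal.rpow_mul, mul_comm (Q / P), hexp]

lemma TestedMuckenhoupt.ballAvgBounded (h : TestedMuckenhoupt W P (2 * ρ) K) (hW : Measurable W)
    (hP : 0 < P) (hρ : 0 < ρ) : BallAvgBounded W P ρ ((2 ^ dim) ^ P * 2 ^ dim * K) := by
  intro f hf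
  have hball : ∀ z h, ‖h‖ < ρ → ballAvg ρ f (z + h) ≤ 2 ^ dim * ballAvg (2 * ρ) f z :=
    fun z h hh => by
      simpa using ballAvg_le_of_dist_add_le (σ := 2 * ρ) (K := 2) hρ
        (by simpa using (by linarith : ‖h‖ + ρ ≤ 2 * ρ)) le_rfl f
  have hlocal : ∀ z, ballAvg ρ (fun x => W x * ballAvg ρ f x ^ P) z ≤
      (2 ^ dim) ^ P * 2 ^ dim * K * ballAvg (2 * ρ) (fun x => W x * f x ^ P) z := fun z => by
    calc ballAvg ρ (fun x => W x * ballAvg ρ f x ^ P) z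
        ≤ ∫⁻ h, W (z + h) * (2 ^ dim * ballAvg (2 * ρ) f z) ^ P ∂ballProb E ρ := by
          refine lintegral_mono_ae ?_
          filter_upwards [ae_norm_lt_ballProb ρ] with h hh
          gcongr
          exact hball z h hh
      _ = ballAvg ρ W z * (2 ^ dim * ballAvg (2 * ρ) f z) ^ P :=
          lintegral_mul_const _ (by fun_prop)
      _ ≤ 2 ^ dim * ballAvg (2 * ρ) W z * (2 ^ dim * ballAvg (2 * ρ) f z) ^ P := by
          gcongr
          simpa using ballAvg_le_of_le (K := 2) hρ (by linarith) le_rfl W z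
      _ = (2 ^ dim) ^ P * 2 ^ dim * (ballAvg (2 * ρ) W z * ballAvg (2 * ρ) f z ^ P) := by
          rw [ENNReal.mul_rpow_of_nonneg _ _ hP.le]; ring
      _ ≤ (2 ^ dim) ^ P * 2 ^ dim * (K * ballAvg (2 * ρ) (fun x => W x * f x ^ P) z) :=
          mul_le_mul_right (h f hf z) _
      _ = _ := by ring
  calc lpPow W P (ballAvg ρ f) = ∫⁻ z, ballAvg ρ (fun x => W x * ballAvg ρ f x ^ P) z :=
        (lintegral_ballAvg hρ (by fun_prop)).symm
    _ ≤ ∫⁻ z, (2 ^ dim) ^ P * 2 ^ dim * K * ballAvg (2 * ρ) (fun x => W x * f x ^ P) z :=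
        lintegral_mono hlocal
    _ = (2 ^ dim) ^ P * 2 ^ dim * K * lpPow W P f := by
        rw [lintegral_const_mul _ (by fun_prop), lintegral_ballAvg (by linarith) (by fun_prop),
          lpPow]

lemma BallAvgBounded.three_halves (h : BallAvgBounded W P ρ K) (hP : 0 ≤ P) (hρ : 0 < ρ) :
    BallAvgBounded W P (3 / 2 * ρ) ((4 ^ dim) ^ P * (K * K)) := by
  intro f hf
  have hdom : ∀ x, ballAvg (3 / 2 * ρ) f x ≤ 4 ^ dim * ballAvg ρ (ballAvg ρ f) x := fun x => by
    simpa using ballAvg_le_ballAvg_ballAvg (τ := ρ / 4) (K := 1) (L := 4) (by linarith)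
      (by linarith) (by linarith) (by linarith) (by linarith) (by linarith) (by linarith) hf x
  calc lpPow W P (ballAvg (3 / 2 * ρ) f)
      ≤ (4 ^ dim) ^ P * lpPow W P (ballAvg ρ (ballAvg ρ f)) :=
        lpPow_le_of_le hP (by finiteness) hdom
    _ ≤ (4 ^ dim) ^ P * (K * (K * lpPow W P f)) := by
        gcongr
        exact (h _ (by fun_prop)).trans (by gcongr; exact h f hf)
    _ = _ := by ring

lemma BallAvgBounded.of_le {σ L : ℝ} (h : BallAvgBounded W P ρ K) (hP : 0 ≤ P) (hσ : 0 < σ)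
    (hσρ : σ ≤ ρ) (hL : ρ ≤ L * σ) :
    BallAvgBounded W P σ ((ENNReal.ofReal L ^ dim) ^ P * K) := by
  intro f hf
  calc lpPow W P (ballAvg σ f) ≤ (ENNReal.ofReal L ^ dim) ^ P * lpPow W P (ballAvg ρ f) :=
        lpPow_le_of_le hP (by finiteness) (ballAvg_le_of_le hσ hσρ hL f)
    _ ≤ (ENNReal.ofReal L ^ dim) ^ P * (K * lpPow W P f) := by
        gcongr
        exact h f hf
    _ = _ := by ring

variable (E) in
lemma exists_ballAvgBounded_mul (hP : 0 ≤ P) (hK : K ≠ ∞) {R : ℝ} (hR : 0 < R) :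
    ∃ C : ℝ≥0∞, C ≠ ∞ ∧ ∀ {W : E → ℝ≥0∞} {ρ : ℝ}, 0 < ρ → BallAvgBounded W P ρ K →
      BallAvgBounded W P (R * ρ) C := by
  have hpow : ∀ N : ℕ, ∃ C : ℝ≥0∞, C ≠ ∞ ∧ ∀ {W : E → ℝ≥0∞} {ρ : ℝ}, 0 < ρ →
      BallAvgBounded W P ρ K → BallAvgBounded W P ((3 / 2) ^ N * ρ) C := fun N => by
    induction N with
    | zero => exact ⟨K, hK, fun _ h => by simpa using h⟩
    | succ N ih =>
      obtain ⟨C, hC, hbound⟩ := ih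
      refine ⟨(4 ^ dim) ^ P * (C * C), by finiteness, fun hρ h => ?_⟩
      rw [pow_succ', mul_assoc]
      exact (hbound hρ h).three_halves hP (by positivity)
  obtain ⟨N, hN⟩ := pow_unbounded_of_one_lt R (by norm_num : (1 : ℝ) < 3 / 2)
  obtain ⟨C, hC, hbound⟩ := hpow N
  refine ⟨(ENNReal.ofReal ((3 / 2) ^ N / R) ^ dim) ^ P * C, by finiteness, fun hρ h => ?_⟩
  exact (hbound hρ h).of_le hP (by positivity) (by gcongr) (by field_simp; rfl)

end Muckenhoupt

/-! ### Dyadic scales and cubes -/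

/-- The dyadic scale `2^{-k}`. -/
def dyadicScale (k : ℕ) : ℝ := 2 ^ (-(k : ℤ))

lemma dyadicScale_pos (k : ℕ) : 0 < dyadicScale k := by
  unfold dyadicScale
  positivity

lemma dyadicScale_zero : dyadicScale 0 = 1 := by
  simp [dyadicScale]

lemma dyadicScale_eq_mul (k i : ℕ) : dyadicScale k = 2 ^ i * dyadicScale (k + i) := by
  simp only [dyadicScale, ← zpow_natCast]
  rw [← zpow_add₀ two_ne_zero]
  congr 1
  push_cast
  ring

lemma dyadicScale_succ (k : ℕ) : dyadicScale k = 2 * dyadicScale (k + 1) := by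
  simpa using dyadicScale_eq_mul k 1

lemma dyadicScale_le_one (k : ℕ) : dyadicScale k ≤ 1 :=
  zpow_le_one_of_nonpos₀ one_le_two (by lia)

lemma cubeAt_eq_ball {n : ℕ} (z : Rn n) {ρ : ℝ} (hρ : 0 < ρ) :
    cubeAt (fun i => z i - ρ) (2 * ρ) = Metric.ball z ρ := by
  ext y
  rw [Metric.mem_ball, dist_pi_lt_iff hρ]
  refine forall_congr' fun i => ?_
  rw [Real.dist_eq, abs_lt]
  constructor <;> rintro ⟨h₁, h₂⟩ <;> constructor <;> linarith

lemma openCube_eq_ball {n : ℕ} (z : Rn n) {ρ : ℝ} (hρ : 0 < ρ) :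
    openCube z ρ = Metric.ball z ρ := by
  ext y
  simp [openCube, dist_pi_lt_iff hρ, Real.dist_eq]

lemma euclNorm_le_mul_norm {n : ℕ} (y : Rn n) : euclNorm y ≤ n * ‖y‖ := by
  calc euclNorm y ≤ ∑ i, |y i| := by
        refine Real.sqrt_le_iff.2 ⟨by positivity, ?_⟩
        simp_rw [← sq_abs (y _)]
        exact Finset.sum_sq_le_sq_sum_of_nonneg fun i _ => abs_nonneg _
    _ ≤ ∑ _i : Fin n, ‖y‖ := Finset.sum_le_sum fun i _ => norm_le_pi_norm y i
    _ = n * ‖y‖ := by simp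

/-! ### Local Muckenhoupt weights and admissible weight sequences -/

section Weights

variable {n : ℕ} {w : Rn n → ℝ} {p₀ P : ℝ}

lemma MemAloc1.exists_testedMuckenhoupt (hA : MemAloc1 n w) (hw : Measurable w) :
    ∃ K : ℝ≥0∞, K ≠ ∞ ∧ ∀ ρ : ℝ, 0 < ρ → 2 * ρ ≤ 1 →
      TestedMuckenhoupt (fun x => ENNReal.ofReal (w x)) 1 ρ K := by
  obtain ⟨C, hC, hA⟩ := hA
  refine ⟨C, hC.ne, fun ρ hρ hρ1 f hf z => ?_⟩
  have hball := hA (fun i => z i - ρ) (2 * ρ) (by linarith) hρ1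
  rw [cubeAt_eq_ball z hρ] at hball
  set W : Rn n → ℝ≥0∞ := fun x => ENNReal.ofReal (w x) with hW
  simp only [ENNReal.rpow_one]
  calc ballAvg ρ W z * ballAvg ρ f z
      = (volume (Metric.ball z ρ))⁻¹ * ∫⁻ y in Metric.ball z ρ, ballAvg ρ W z * f y := by
        rw [ballAvg_eq ρ f, lintegral_const_mul _ hf]; ring
    _ ≤ (volume (Metric.ball z ρ))⁻¹ * ∫⁻ y in Metric.ball z ρ, C * (W y * f y) := by
        refine mul_le_mul_right (lintegral_mono_ae ?_) _
        filter_upwards [hball] with y hy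
        rw [← mul_assoc, ballAvg_eq, mul_comm _ (lintegral _ _), ← div_eq_mul_inv]
        gcongr
        exact ENNReal.div_le_of_le_mul (hy.trans_eq (by rw [hW]; ring))
    _ = C * ballAvg ρ (fun x => W x * f x) z := by
        rw [ballAvg_eq, lintegral_const_mul _ (by fun_prop)]; ring

lemma ballAvg_rpow_le_mul_ballAvg_rpow_neg {W f : Rn n → ℝ≥0∞} (hW : Measurable W)
    (hW0 : ∀ x, W x ≠ 0) (hWt : ∀ x, W x ≠ ∞) (hf : Measurable f) (hp₀ : 1 < p₀) (ρ : ℝ)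
    (z : Rn n) :
    ballAvg ρ f z ^ p₀ ≤ ballAvg ρ (fun x => W x * f x ^ p₀) z *
      ballAvg ρ (fun x => W x ^ (-1 / (p₀ - 1))) z ^ (p₀ - 1) := by
  have h0 : 0 < p₀ := by linarith
  have h1 : p₀ - 1 ≠ 0 := by linarith
  have hconj := Real.HolderConjugate.conjExponent hp₀
  have hholder := ENNReal.lintegral_mul_le_Lp_mul_Lq (ballProb (Rn n) ρ) hconj
    (f := fun h => f (z + h) * W (z + h) ^ (1 / p₀))
    (g := fun h => W (z + h) ^ (-(1 / p₀))) (by fun_prop) (by fun_prop)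
  have hprod : ∀ h : Rn n,
      f (z + h) * W (z + h) ^ (1 / p₀) * W (z + h) ^ (-(1 / p₀)) = f (z + h) := fun h => by
    rw [mul_assoc, ← ENNReal.rpow_add _ _ (hW0 _) (hWt _), add_neg_cancel, ENNReal.rpow_zero,
      mul_one]
  have hfst : ∀ h : Rn n,
      (f (z + h) * W (z + h) ^ (1 / p₀)) ^ p₀ = W (z + h) * f (z + h) ^ p₀ := fun h => by
    rw [ENNReal.mul_rpow_of_nonneg _ _ h0.le, ← ENNReal.rpow_mul, one_div_mul_cancel h0.ne',
      ENNReal.rpow_one, mul_comm]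
  have hsnd : ∀ h : Rn n,
      (W (z + h) ^ (-(1 / p₀))) ^ p₀.conjExponent = W (z + h) ^ (-1 / (p₀ - 1)) := fun h => by
    rw [← ENNReal.rpow_mul, Real.conjExponent]
    congr 1
    field_simp
  simp only [Pi.mul_apply, hprod, hfst, hsnd] at hholder
  have hexp : 1 / p₀.conjExponent * p₀ = p₀ - 1 := by rw [Real.conjExponent]; field_simp
  refine (ENNReal.rpow_le_rpow hholder h0.le).trans_eq ?_
  rw [ENNReal.mul_rpow_of_nonneg _ _ h0.le, ← ENNReal.rpow_mul, ← ENNReal.rpow_mul,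
    one_div_mul_cancel h0.ne', ENNReal.rpow_one, hexp]
  rfl

lemma MemAlocGt.exists_testedMuckenhoupt (hA : MemAlocGt n p₀ w) (hw : IsWeight w)
    (hp₀ : 1 < p₀) :
    ∃ K : ℝ≥0∞, K ≠ ∞ ∧ ∀ ρ : ℝ, 0 < ρ → 2 * ρ ≤ 1 →
      TestedMuckenhoupt (fun x => ENNReal.ofReal (w x)) p₀ ρ K := by
  obtain ⟨C, hC, hA⟩ := hA
  refine ⟨C, hC.ne, fun ρ hρ hρ1 f hf z => ?_⟩
  have hball := hA (fun i => z i - ρ) (2 * ρ) (by linarith) hρ1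
  rw [cubeAt_eq_ball z hρ, ← ballAvg_eq, ← ballAvg_eq] at hball
  have hwm := hw.1
  set W : Rn n → ℝ≥0∞ := fun x => ENNReal.ofReal (w x) with hW
  calc ballAvg ρ W z * ballAvg ρ f z ^ p₀
      ≤ ballAvg ρ W z * (ballAvg ρ (fun x => W x * f x ^ p₀) z *
          ballAvg ρ (fun x => W x ^ (-1 / (p₀ - 1))) z ^ (p₀ - 1)) := by
        gcongr
        exact ballAvg_rpow_le_mul_ballAvg_rpow_neg (by fun_prop)
          (fun x => by simpa [hW] using hw.2 x) (fun x => ENNReal.ofReal_ne_top) hf hp₀ ρ z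
    _ = ballAvg ρ W z * ballAvg ρ (fun x => W x ^ (-1 / (p₀ - 1))) z ^ (p₀ - 1) *
          ballAvg ρ (fun x => W x * f x ^ p₀) z := by ring
    _ ≤ C * ballAvg ρ (fun x => W x * f x ^ p₀) z := by gcongr

lemma MemAlocP.exists_testedMuckenhoupt (hA : MemAlocP n p₀ w) (hw : IsWeight w)
    (hp₀ : 1 ≤ p₀) (hP : p₀ ≤ P) :
    ∃ K : ℝ≥0∞, K ≠ ∞ ∧ ∀ ρ : ℝ, 0 < ρ → 2 * ρ ≤ 1 →
      TestedMuckenhoupt (fun x => ENNReal.ofReal (w x)) P ρ K := by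
  obtain ⟨K, hK, h⟩ : ∃ K : ℝ≥0∞, K ≠ ∞ ∧ ∀ ρ : ℝ, 0 < ρ → 2 * ρ ≤ 1 →
      TestedMuckenhoupt (fun x => ENNReal.ofReal (w x)) p₀ ρ K := by
    unfold MemAlocP at hA
    split_ifs at hA with h
    · subst h
      exact hA.exists_testedMuckenhoupt hw.1
    · exact hA.exists_testedMuckenhoupt hw (lt_of_le_of_ne hp₀ (Ne.symm h))
  exact ⟨K, hK, fun ρ hρ hρ1 => (h ρ hρ hρ1).mono_exponent (by linarith) hP hρ⟩

end Weights

lemma TestedMuckenhoupt.mul_of_oscillation {E : Type*} [NormedAddCommGroup E] [MeasureSpace E]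
    [BorelSpace E] {W σ : E → ℝ≥0∞} {P ρ : ℝ} {K S : ℝ≥0∞} (h : TestedMuckenhoupt W P ρ K)
    (hW : Measurable W) (hσ : Measurable σ) (hS : ∀ x y, ‖x - y‖ < ρ → σ x ≤ S * σ y) :
    TestedMuckenhoupt (fun x => W x * σ x) P ρ (S * S * K) := by
  intro f hf z
  have hupper : ballAvg ρ (fun x => W x * σ x) z ≤ S * σ z * ballAvg ρ W z := by
    unfold ballAvg
    rw [← lintegral_const_mul _ (by fun_prop)]
    refine lintegral_mono_ae ?_
    filter_upwards [ae_norm_lt_ballProb ρ] with h hh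
    rw [mul_comm]
    gcongr
    exact hS _ _ (by simpa using hh)
  have hlower : σ z * ballAvg ρ (fun x => W x * f x ^ P) z ≤
      S * ballAvg ρ (fun x => W x * σ x * f x ^ P) z := by
    unfold ballAvg
    rw [← lintegral_const_mul _ (by fun_prop), ← lintegral_const_mul _ (by fun_prop)]
    refine lintegral_mono_ae ?_
    filter_upwards [ae_norm_lt_ballProb ρ] with h hh
    calc σ z * (W (z + h) * f (z + h) ^ P)
        ≤ S * σ (z + h) * (W (z + h) * f (z + h) ^ P) := by
          gcongr
          exact hS _ _ (by simpa using hh)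
      _ = S * (W (z + h) * σ (z + h) * f (z + h) ^ P) := by ring
  calc ballAvg ρ (fun x => W x * σ x) z * ballAvg ρ f z ^ P
      ≤ S * σ z * ballAvg ρ W z * ballAvg ρ f z ^ P := by gcongr
    _ = S * σ z * (ballAvg ρ W z * ballAvg ρ f z ^ P) := by ring
    _ ≤ S * σ z * (K * ballAvg ρ (fun x => W x * f x ^ P) z) := mul_le_mul_right (h f hf z) _
    _ = S * K * (σ z * ballAvg ρ (fun x => W x * f x ^ P) z) := by ring
    _ ≤ S * K * (S * ballAvg ρ (fun x => W x * σ x * f x ^ P) z) := mul_le_mul_right hlower _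
    _ = S * S * K * ballAvg ρ (fun x => W x * σ x * f x ^ P) z := by ring

section LocY

variable {n : ℕ} {α₁ α₂ α₃ : ℝ} {s : ℕ → Rn n → ℝ}

lemma MemLocY.exists_growth (hs : MemLocY n α₁ α₂ α₃ s) :
    ∃ C : ℝ≥0∞, C ≠ ∞ ∧ ∀ (k i : ℕ) (x : Rn n),
      ENNReal.ofReal (s (k + i) x) ≤ C * 2 ^ (α₂ * i) * ENNReal.ofReal (s k x) := by
  obtain ⟨hweight, ⟨C, hC, hratio⟩, -⟩ := hs
  refine ⟨ENNReal.ofReal C, ENNReal.ofReal_ne_top, fun k i x => ?_⟩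
  have hle := (hratio k (k + i) (by lia) x).2
  rw [div_le_iff₀ ((hweight k).2 x), Nat.cast_add, add_sub_cancel_left] at hle
  refine (ENNReal.ofReal_le_ofReal hle).trans_eq ?_
  rw [ENNReal.ofReal_mul (by positivity), ENNReal.ofReal_mul hC.le,
    ← ENNReal.ofReal_rpow_of_pos two_pos, ENNReal.ofReal_ofNat]

lemma MemLocY.exists_decay (hs : MemLocY n α₁ α₂ α₃ s) :
    ∃ C : ℝ≥0∞, C ≠ ∞ ∧ ∀ (k i : ℕ) (x : Rn n),
      ENNReal.ofReal (s k x) ≤ C * 2 ^ (-(α₁ * i)) * ENNReal.ofReal (s (k + i) x) := by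
  obtain ⟨hweight, ⟨C, hC, hratio⟩, -⟩ := hs
  refine ⟨ENNReal.ofReal C, ENNReal.ofReal_ne_top, fun k i x => ?_⟩
  have hle := (hratio k (k + i) (by lia) x).1
  rw [le_div_iff₀ ((hweight k).2 x), Nat.cast_add, add_sub_cancel_left] at hle
  have hle' : s k x ≤ C * 2 ^ (-(α₁ * i)) * s (k + i) x := by
    rw [Real.rpow_neg zero_le_two, ← div_eq_mul_inv, div_mul_eq_mul_div,
      le_div_iff₀ (by positivity)]
    rw [mul_assoc, inv_mul_le_iff₀ hC] at hle
    linarith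
  refine (ENNReal.ofReal_le_ofReal hle').trans_eq ?_
  rw [ENNReal.ofReal_mul (by positivity), ENNReal.ofReal_mul hC.le,
    ← ENNReal.ofReal_rpow_of_pos two_pos, ENNReal.ofReal_ofNat]

lemma MemLocY.le_mul_of_norm_sub_lt (hs : MemLocY n α₁ α₂ α₃ s) (k : ℕ) {x y : Rn n}
    (hxy : ‖x - y‖ < 1 / (2 * (n + 1)) * dyadicScale k) :
    ENNReal.ofReal (s k x) ≤ ENNReal.ofReal (2 ^ α₃) * ENNReal.ofReal (s k y) := by
  rw [← ENNReal.ofReal_mul (by positivity)]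
  refine ENNReal.ofReal_le_ofReal (hs.2.2 k x y ((euclNorm_le_mul_norm _).trans ?_))
  change _ ≤ dyadicScale k
  have hscale := dyadicScale_pos k
  calc n * ‖x - y‖ ≤ n * (1 / (2 * (n + 1)) * dyadicScale k) := by gcongr
    _ = n / (2 * (n + 1)) * dyadicScale k := by ring
    _ ≤ 1 * dyadicScale k := by
        gcongr
        rw [div_le_one (by positivity)]
        linarith [(Nat.cast_nonneg n : (0 : ℝ) ≤ n)]
    _ = dyadicScale k := one_mul _

end LocY

/-- The properties of the weights `W_k = t_k ^ p` on which both embeddings rest: the Muckenhoupt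
condition at scale `2^{-k}`, uniformly in `k`, and geometric growth in `k`, from below with rate
`A₁` and from above with rate `A₂`. -/
structure AdmissibleWeights {E : Type*} [NormedAddCommGroup E] [MeasureSpace E]
    (W : ℕ → E → ℝ≥0∞) (P A₁ A₂ : ℝ) : Prop where
  measurable : ∀ k, Measurable (W k)
  ne_zero : ∀ k x, W k x ≠ 0
  tested : ∃ ε > 0, ∃ K : ℝ≥0∞, K ≠ ∞ ∧ ∀ k, TestedMuckenhoupt (W k) P (ε * dyadicScale k) K
  growth : ∃ C : ℝ≥0∞, C ≠ ∞ ∧ ∀ (k i : ℕ) x, W (k + i) x ≤ C * 2 ^ (A₂ * i) * W k x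
  decay : ∃ C : ℝ≥0∞, C ≠ ∞ ∧ ∀ (k i : ℕ) x, W k x ≤ C * 2 ^ (-(A₁ * i)) * W (k + i) x

lemma rpow_mul_le_of_le_mul_two_rpow {p a : ℝ} (hp : 0 ≤ p) {x y g C : ℝ≥0∞}
    (h : x ≤ C * 2 ^ a * y) : g * x ^ p ≤ C ^ p * 2 ^ (a * p) * (g * y ^ p) := by
  calc g * x ^ p ≤ g * (C * 2 ^ a * y) ^ p := by gcongr
    _ = C ^ p * 2 ^ (a * p) * (g * y ^ p) := by
        rw [ENNReal.mul_rpow_of_nonneg _ _ hp, ENNReal.mul_rpow_of_nonneg _ _ hp,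
          ← ENNReal.rpow_mul]
        ring

theorem admissibleWeights_of_memLocY {n : ℕ} {p p₀ P α₁ α₂ α₃ : ℝ} {γ : Rn n → ℝ}
    {s : ℕ → Rn n → ℝ} (hp : 0 < p) (hp₀ : 1 ≤ p₀) (hP : p₀ ≤ P) (hγ : IsWeight γ)
    (hA : MemAlocP n p₀ (fun x => γ x ^ p)) (hs : MemLocY n α₁ α₂ α₃ s) :
    AdmissibleWeights (fun k x => ENNReal.ofReal (γ x * s k x) ^ p) P (α₁ * p) (α₂ * p) := by
  have hsm : ∀ k, Measurable (s k) := fun k => (hs.1 k).1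
  have hγm := hγ.1
  have hsplit : (fun k x => ENNReal.ofReal (γ x * s k x) ^ p) =
      fun k x => ENNReal.ofReal (γ x ^ p) * ENNReal.ofReal (s k x) ^ p := by
    ext k x
    rw [ENNReal.ofReal_mul (hγ.2 x).le, ENNReal.mul_rpow_of_nonneg _ _ hp.le,
      ENNReal.ofReal_rpow_of_pos (hγ.2 x)]
  obtain ⟨K, hK, htested⟩ := hA.exists_testedMuckenhoupt
    ⟨by fun_prop, fun x => Real.rpow_pos_of_pos (hγ.2 x) p⟩ hp₀ hP
  obtain ⟨C₂, hC₂, hgrowth⟩ := hs.exists_growth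
  obtain ⟨C₁, hC₁, hdecay⟩ := hs.exists_decay
  rw [hsplit]
  refine ⟨by fun_prop, fun k x => ?_, ⟨1 / (2 * (n + 1)), by positivity,
    ENNReal.ofReal (2 ^ α₃) ^ p * ENNReal.ofReal (2 ^ α₃) ^ p * K, by finiteness, fun k => ?_⟩,
    ⟨C₂ ^ p, by finiteness, fun k i x => ?_⟩, ⟨C₁ ^ p, by finiteness, fun k i x => ?_⟩⟩
  · simp [Real.rpow_pos_of_pos (hγ.2 x), (hs.1 k).2 x]
  · have hscale := dyadicScale_pos k
    have hradius : 2 * (1 / (2 * (n + 1)) * dyadicScale k) ≤ 1 := by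
      rw [show 2 * (1 / (2 * ((n : ℝ) + 1)) * dyadicScale k) = dyadicScale k / (n + 1) by
        field_simp]
      exact div_le_one_of_le₀
        (by linarith [dyadicScale_le_one k, (Nat.cast_nonneg n : (0 : ℝ) ≤ n)]) (by positivity)
    refine (htested _ (by positivity) hradius).mul_of_oscillation (by fun_prop) (by fun_prop)
      fun x y hxy => ?_
    rw [← ENNReal.mul_rpow_of_nonneg _ _ hp.le]
    gcongr
    exact hs.le_mul_of_norm_sub_lt k hxy
  · simpa only [mul_right_comm] using rpow_mul_le_of_le_mul_two_rpow hp.le (hgrowth k i x)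
  · simpa only [neg_mul, mul_right_comm] using
      rpow_mul_le_of_le_mul_two_rpow hp.le (hdecay k i x)

/-! ### Finite differences -/

/-- The alternating sum `Σ_j (-1)^{l+j} C(l,j) t_j` that defines the difference of order `l`. -/
def alternatingSum (l : ℕ) (t : ℕ → ℝ) : ℝ :=
  ∑ j ∈ Finset.range (l + 1), ((l.choose j : ℝ) * (-1) ^ (l + j)) * t j

lemma diffl_eq_alternatingSum {n : ℕ} (l : ℕ) (h : Rn n) (φ : Rn n → ℝ) (x : Rn n) :
    diffl l h φ x = alternatingSum l fun j => φ (x + (j : ℝ) • h) := rfl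

lemma enorm_alternatingSum_sub_le (l : ℕ) (t : ℕ → ℝ) :
    ‖alternatingSum l t - (-1) ^ l * t 0‖ₑ ≤ 2 ^ l * ∑ j ∈ Finset.Icc 1 l, ‖t j‖ₑ := by
  have hsplit : alternatingSum l t - (-1) ^ l * t 0 =
      ∑ j ∈ Finset.Icc 1 l, ((l.choose j : ℝ) * (-1) ^ (l + j)) * t j := by
    rw [alternatingSum, Nat.range_succ_eq_Icc_zero, ← Finset.add_sum_Ioc_eq_sum_Icc (Nat.zero_le l)]
    simp only [Nat.choose_zero_right, Nat.cast_one, one_mul, add_zero]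
    rw [add_sub_cancel_left, ← Finset.Icc_add_one_left_eq_Ioc, zero_add]
  rw [hsplit, Finset.mul_sum]
  refine (enorm_sum_le _ _).trans (Finset.sum_le_sum fun j _ => ?_)
  rw [enorm_mul, enorm_mul, enorm_pow, enorm_neg, enorm_one, one_pow, mul_one]
  gcongr
  simpa using mod_cast Nat.choose_le_two_pow l j

lemma enorm_alternatingSum_le (l : ℕ) (t : ℕ → ℝ) :
    ‖alternatingSum l t‖ₑ ≤ ‖t 0‖ₑ + 2 ^ l * ∑ j ∈ Finset.Icc 1 l, ‖t j‖ₑ := by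
  calc ‖alternatingSum l t‖ₑ
      = ‖(-1) ^ l * t 0 + (alternatingSum l t - (-1) ^ l * t 0)‖ₑ := by rw [add_sub_cancel]
    _ ≤ ‖(-1) ^ l * t 0‖ₑ + ‖alternatingSum l t - (-1) ^ l * t 0‖ₑ := enorm_add_le _ _
    _ ≤ ‖t 0‖ₑ + 2 ^ l * ∑ j ∈ Finset.Icc 1 l, ‖t j‖ₑ := by
        gcongr
        · simp [enorm_mul, enorm_pow]
        · exact enorm_alternatingSum_sub_le l t

lemma enorm_zero_le_enorm_alternatingSum (l : ℕ) (t : ℕ → ℝ) :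
    ‖t 0‖ₑ ≤ ‖alternatingSum l t‖ₑ + 2 ^ l * ∑ j ∈ Finset.Icc 1 l, ‖t j‖ₑ := by
  calc ‖t 0‖ₑ = ‖(-1) ^ l * t 0‖ₑ := by simp [enorm_mul, enorm_pow]
    _ = ‖alternatingSum l t - (alternatingSum l t - (-1) ^ l * t 0)‖ₑ := by
        congr 1; ring
    _ ≤ ‖alternatingSum l t‖ₑ + ‖alternatingSum l t - (-1) ^ l * t 0‖ₑ := enorm_sub_le
    _ ≤ ‖alternatingSum l t‖ₑ + 2 ^ l * ∑ j ∈ Finset.Icc 1 l, ‖t j‖ₑ := by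
        gcongr
        exact enorm_alternatingSum_sub_le l t

lemma alternatingSum_diffl_comm {n : ℕ} (l : ℕ) (φ : Rn n → ℝ) (y u h v : Rn n) :
    alternatingSum l (fun i => diffl l (h + (i : ℝ) • v) φ (y + (i : ℝ) • u)) =
      alternatingSum l (fun j => diffl l (u + (j : ℝ) • v) φ (y + (j : ℝ) • h)) := by
  simp only [alternatingSum, diffl, Finset.mul_sum]
  rw [Finset.sum_comm]
  refine Finset.sum_congr rfl fun j _ => Finset.sum_congr rfl fun i _ => ?_
  rw [show y + (i : ℝ) • u + (j : ℝ) • (h + (i : ℝ) • v) =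
      y + (j : ℝ) • h + (i : ℝ) • (u + (j : ℝ) • v) by module]
  ring

lemma enorm_diffl_le_add {n : ℕ} (l : ℕ) (φ : Rn n → ℝ) (y u h v : Rn n) :
    ‖diffl l h φ y‖ₑ ≤ ‖diffl l u φ y‖ₑ + 2 ^ l * ∑ j ∈ Finset.Icc 1 l,
      (‖diffl l (u + (j : ℝ) • v) φ (y + (j : ℝ) • h)‖ₑ +
        ‖diffl l (h + (j : ℝ) • v) φ (y + (j : ℝ) • u)‖ₑ) := by
  have hh := enorm_zero_le_enorm_alternatingSum l
    fun i => diffl l (h + (i : ℝ) • v) φ (y + (i : ℝ) • u)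
  have hu := enorm_alternatingSum_le l
    fun j => diffl l (u + (j : ℝ) • v) φ (y + (j : ℝ) • h)
  rw [alternatingSum_diffl_comm] at hh
  simp only [Nat.cast_zero, zero_smul, add_zero] at hh hu
  refine hh.trans ((add_le_add_left hu _).trans_eq ?_)
  rw [Finset.sum_add_distrib]
  ring

lemma rpow_le_of_le_add_mul_sum {e : ℝ} (he : 0 < e) {δ : ℝ≥0∞} (hδ : δ ≠ 0) (hδ' : δ ≠ ∞)
    {ι : Type*} {s : Finset ι} {t : ι → ℝ≥0∞} {A B c : ℝ≥0∞} (h : A ≤ B + c * ∑ j ∈ s, t j) :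
    A ^ e ≤ (1 + δ) ^ e * B ^ e +
      (1 + δ⁻¹) ^ e * (c ^ e * (s.card : ℝ≥0∞) ^ e) * ∑ j ∈ s, t j ^ e := by
  calc A ^ e ≤ (B + c * ∑ j ∈ s, t j) ^ e := by gcongr
    _ ≤ (1 + δ) ^ e * B ^ e + (1 + δ⁻¹) ^ e * (c * ∑ j ∈ s, t j) ^ e :=
        add_rpow_le_one_add_rpow_mul _ _ he hδ hδ'
    _ ≤ (1 + δ) ^ e * B ^ e +
          (1 + δ⁻¹) ^ e * (c ^ e * ((s.card : ℝ≥0∞) ^ e * ∑ j ∈ s, t j ^ e)) := by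
        rw [ENNReal.mul_rpow_of_nonneg _ _ he.le]
        gcongr
        exact sum_rpow_le_card_rpow_mul s t he
    _ = _ := by ring

lemma exists_enorm_diffl_rpow_le (l : ℕ) {e : ℝ} (he : 0 < e) {δ : ℝ≥0∞} (hδ : δ ≠ 0)
    (hδ' : δ ≠ ∞) :
    ∃ C : ℝ≥0∞, C ≠ ∞ ∧ ∀ {n : ℕ} (φ : Rn n → ℝ) (y u h v : Rn n),
      ‖diffl l h φ y‖ₑ ^ e ≤ (1 + δ) ^ e * ‖diffl l u φ y‖ₑ ^ e + C * ∑ j ∈ Finset.Icc 1 l,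
        (‖diffl l (u + (j : ℝ) • v) φ (y + (j : ℝ) • h)‖ₑ ^ e +
          ‖diffl l (h + (j : ℝ) • v) φ (y + (j : ℝ) • u)‖ₑ ^ e) := by
  refine ⟨(1 + δ⁻¹) ^ e * ((2 ^ l) ^ e * ((Finset.Icc 1 l).card : ℝ≥0∞) ^ e) * 2 ^ e,
    by finiteness, fun φ y u h v => ?_⟩
  refine (rpow_le_of_le_add_mul_sum he hδ hδ' (enorm_diffl_le_add l φ y u h v)).trans ?_
  rw [mul_assoc _ (2 ^ e), Finset.mul_sum (a := 2 ^ e)]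
  gcongr
  exact add_rpow_le_two_rpow_mul _ _ he

@[fun_prop]
lemma measurable_diffl {α : Type*} [MeasurableSpace α] {n : ℕ} (l : ℕ) {φ : Rn n → ℝ}
    {f g : α → Rn n} (hφ : Measurable φ) (hf : Measurable f) (hg : Measurable g) :
    Measurable fun z => diffl l (f z) φ (g z) := by
  unfold diffl
  fun_prop

/-! ### Means of differences -/

section

variable {E : Type*} [NormedAddCommGroup E] [MeasureSpace E] [BorelSpace E] [NormedSpace ℝ E]
  [FiniteDimensional ℝ E] [(volume : Measure E).IsAddHaarMeasure]

lemma sum_lintegral_ballProb_smul_le (l : ℕ) {σ : ℝ} (hσ : 0 < σ) {f : E → ℝ≥0∞}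
    (hf : Measurable f) (x : E) :
    ∑ j ∈ Finset.Icc 1 l, ∫⁻ h, f (x + (j : ℝ) • h) ∂ballProb E σ ≤
      l * ENNReal.ofReal l ^ Module.finrank ℝ E * ballAvg (l * σ) f x := by
  calc ∑ j ∈ Finset.Icc 1 l, ∫⁻ h, f (x + (j : ℝ) • h) ∂ballProb E σ
      ≤ ∑ _j ∈ Finset.Icc 1 l,
          ENNReal.ofReal l ^ Module.finrank ℝ E * ballAvg (l * σ) f x := by
        refine Finset.sum_le_sum fun j hj => ?_
        obtain ⟨hj1, hjl⟩ := Finset.mem_Icc.1 hj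
        have hj1' : (1 : ℝ) ≤ j := mod_cast hj1
        rw [lintegral_ballProb_smul (by linarith) σ hf]
        refine ballAvg_le_of_le (by positivity) (by gcongr) ?_ f x
        gcongr
        exact le_mul_of_one_le_left hσ.le hj1'
    _ = _ := by
        rw [Finset.sum_const, Nat.card_Icc, Nat.add_sub_cancel, nsmul_eq_mul, mul_assoc]

lemma lintegral_ballProb_le_of_le_add_sum (l : ℕ) {σ : ℝ} (hσ : 0 < σ) {A B f : E → ℝ≥0∞}
    {c C : ℝ≥0∞} (hB : Measurable B) (hf : Measurable f) {x : E}
    (h : ∀ h, ‖h‖ < σ → A h ≤ c * B h + C * ∑ j ∈ Finset.Icc 1 l, f (x + (j : ℝ) • h)) :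
    ∫⁻ h, A h ∂ballProb E σ ≤ c * ∫⁻ h, B h ∂ballProb E σ +
      C * (l * ENNReal.ofReal l ^ Module.finrank ℝ E) * ballAvg (l * σ) f x := by
  calc ∫⁻ h, A h ∂ballProb E σ
      ≤ ∫⁻ h, (c * B h + C * ∑ j ∈ Finset.Icc 1 l, f (x + (j : ℝ) • h)) ∂ballProb E σ :=
        lintegral_mono_ae ((ae_norm_lt_ballProb σ).mono h)
    _ = c * ∫⁻ h, B h ∂ballProb E σ +
          C * ∑ j ∈ Finset.Icc 1 l, ∫⁻ h, f (x + (j : ℝ) • h) ∂ballProb E σ := by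
        rw [lintegral_add_left (by fun_prop), lintegral_const_mul _ hB,
          lintegral_const_mul _ (by fun_prop), lintegral_finsetSum _ (by fun_prop)]
    _ ≤ _ := by
        rw [mul_assoc C]
        gcongr
        exact sum_lintegral_ballProb_smul_le l hσ hf x

end

section DifferenceMeans

variable {n : ℕ} {φ : Rn n → ℝ} {e : ℝ}

/-- The mean of `|Δ^l(h)φ(x)|^e` over `h ∈ ρ Iⁿ`, i.e. `Δ̄^l_e(ρ)φ(x)^e` up to a constant. -/
def diffMean (l : ℕ) (φ : Rn n → ℝ) (e ρ : ℝ) (x : Rn n) : ℝ≥0∞ :=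
  ∫⁻ h, ‖diffl l h φ x‖ₑ ^ e ∂ballProb (Rn n) ρ

lemma diffMean_eq_ballAvg (l : ℕ) (φ : Rn n → ℝ) (e ρ : ℝ) (x : Rn n) :
    diffMean l φ e ρ x = ballAvg ρ (fun h => ‖diffl l h φ x‖ₑ ^ e) 0 := by
  simp only [diffMean, ballAvg, zero_add]

@[fun_prop]
lemma measurable_diffMean (l : ℕ) (hφ : Measurable φ) (e ρ : ℝ) :
    Measurable (diffMean l φ e ρ) := by
  have := sFinite_ballProb (E := Rn n) ρ
  unfold diffMean
  exact Measurable.lintegral_prod_right' (f := fun z : Rn n × Rn n => ‖diffl l z.2 φ z.1‖ₑ ^ e)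
    (by fun_prop)

lemma diffMean_le_of_le (l : ℕ) (φ : Rn n → ℝ) (e : ℝ) {ρ σ K : ℝ} (hρ : 0 < ρ) (hρσ : ρ ≤ σ)
    (hK : σ ≤ K * ρ) (x : Rn n) :
    diffMean l φ e ρ x ≤ ENNReal.ofReal K ^ Module.finrank ℝ (Rn n) * diffMean l φ e σ x := by
  simpa only [diffMean_eq_ballAvg] using ballAvg_le_of_le hρ hρσ hK _ 0

lemma exists_diffMean_le_enorm (n l : ℕ) (he : 0 < e) :
    ∃ C : ℝ≥0∞, C ≠ ∞ ∧ ∀ φ : Rn n → ℝ, Measurable φ → ∀ {ρ : ℝ}, 0 < ρ → ∀ x,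
      diffMean l φ e ρ x ≤ C * (‖φ x‖ₑ ^ e + ballAvg (l * ρ) (fun y => ‖φ y‖ₑ ^ e) x) ∧
      ‖φ x‖ₑ ^ e ≤ C * (diffMean l φ e ρ x + ballAvg (l * ρ) (fun y => ‖φ y‖ₑ ^ e) x) := by
  set C₀ : ℝ≥0∞ := (1 + 1⁻¹) ^ e * ((2 ^ l) ^ e * ((Finset.Icc 1 l).card : ℝ≥0∞) ^ e)
  set C₁ : ℝ≥0∞ := C₀ * (l * ENNReal.ofReal l ^ Module.finrank ℝ (Rn n))
  refine ⟨(1 + 1) ^ e + C₁, by finiteness, fun φ hφ ρ hρ x => ?_⟩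
  have := isProbabilityMeasure_ballProb (E := Rn n) hρ
  have hcombine : ∀ a b : ℝ≥0∞, (1 + 1) ^ e * a + C₁ * b ≤ ((1 + 1) ^ e + C₁) * (a + b) :=
    fun a b => by
      rw [mul_add]
      gcongr
      exacts [le_self_add, le_add_self]
  constructor
  · refine le_trans ?_ (hcombine _ _)
    have hmean := lintegral_ballProb_le_of_le_add_sum l hρ (x := x)
      (A := fun h => ‖diffl l h φ x‖ₑ ^ e) (B := fun _ => ‖φ x‖ₑ ^ e)
      (f := fun y => ‖φ y‖ₑ ^ e) (c := (1 + 1) ^ e) (C := C₀) (by fun_prop) (by fun_prop)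
      fun h _ => rpow_le_of_le_add_mul_sum he one_ne_zero one_ne_top (by
        simpa [diffl_eq_alternatingSum] using
          enorm_alternatingSum_le l fun j => φ (x + (j : ℝ) • h))
    rwa [lintegral_const, measure_univ, mul_one] at hmean
  · refine le_trans ?_ (hcombine _ _)
    have hmean := lintegral_ballProb_le_of_le_add_sum l hρ (x := x)
      (A := fun _ => ‖φ x‖ₑ ^ e) (B := fun h => ‖diffl l h φ x‖ₑ ^ e)
      (f := fun y => ‖φ y‖ₑ ^ e) (c := (1 + 1) ^ e) (C := C₀) (by fun_prop) (by fun_prop)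
      fun h _ => rpow_le_of_le_add_mul_sum he one_ne_zero one_ne_top (by
        simpa [diffl_eq_alternatingSum] using
          enorm_zero_le_enorm_alternatingSum l fun j => φ (x + (j : ℝ) • h))
    rwa [lintegral_const, measure_univ, mul_one] at hmean

lemma lintegral_sum_lintegral_diffl_le (l : ℕ) (hφ : Measurable φ) {ρ τ : ℝ} (hτ : 0 < τ)
    (x : Rn n) :
    ∫⁻ h, ∑ j ∈ Finset.Icc 1 l, ∫⁻ u, ‖diffl l h φ (x + (j : ℝ) • u)‖ₑ ^ e ∂ballProb (Rn n) τ
        ∂ballProb (Rn n) ρ ≤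
      l * ENNReal.ofReal l ^ Module.finrank ℝ (Rn n) * ballAvg (l * τ) (diffMean l φ e ρ) x := by
  have := sFinite_ballProb (E := Rn n) ρ
  have := sFinite_ballProb (E := Rn n) τ
  have hshift : ∀ j : ℕ, Measurable fun z : Rn n × Rn n =>
      ‖diffl l z.1 φ (x + (j : ℝ) • z.2)‖ₑ ^ e := fun j => by fun_prop
  rw [lintegral_finsetSum _ fun j _ => (hshift j).lintegral_prod_right']
  refine (Finset.sum_congr rfl fun j _ => ?_).trans_le
    (sum_lintegral_ballProb_smul_le l hτ (measurable_diffMean l hφ e ρ) x)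
  exact lintegral_lintegral_swap (hshift j).aemeasurable

lemma exists_diffMean_le_add (n l : ℕ) (he : 0 < e) {δ : ℝ≥0∞} (hδ : δ ≠ 0) (hδ' : δ ≠ ∞) :
    ∃ C : ℝ≥0∞, C ≠ ∞ ∧ ∀ φ : Rn n → ℝ, Measurable φ → ∀ {ρ τ : ℝ}, 0 < ρ → 0 < τ → ∀ x,
      diffMean l φ e ρ x ≤ (1 + δ) ^ e * diffMean l φ e τ x +
        C * (ballAvg (l * ρ) (diffMean l φ e τ) x + ballAvg (l * τ) (diffMean l φ e ρ) x) := by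
  obtain ⟨C, hC, hdiff⟩ := exists_enorm_diffl_rpow_le l he hδ hδ'
  refine ⟨C * (l * ENNReal.ofReal l ^ Module.finrank ℝ (Rn n)), by finiteness,
    fun φ hφ ρ τ hρ hτ x => ?_⟩
  have := isProbabilityMeasure_ballProb (E := Rn n) hρ
  have := isProbabilityMeasure_ballProb (E := Rn n) hτ
  set R : Rn n → ℝ≥0∞ := fun h =>
    ∑ j ∈ Finset.Icc 1 l, ∫⁻ u, ‖diffl l h φ (x + (j : ℝ) • u)‖ₑ ^ e ∂ballProb (Rn n) τ
  have hR : Measurable R := Finset.measurable_fun_sum _ fun j _ =>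
    Measurable.lintegral_prod_right'
      (f := fun z : Rn n × Rn n => ‖diffl l z.1 φ (x + (j : ℝ) • z.2)‖ₑ ^ e) (by fun_prop)
  have hpointwise : ∀ h, ‖diffl l h φ x‖ₑ ^ e ≤
      1 * ((1 + δ) ^ e * diffMean l φ e τ x + C * R h) +
        C * ∑ j ∈ Finset.Icc 1 l, diffMean l φ e τ (x + (j : ℝ) • h) := fun h => by
    calc ‖diffl l h φ x‖ₑ ^ e = ∫⁻ _u, ‖diffl l h φ x‖ₑ ^ e ∂ballProb (Rn n) τ := by simp
      _ ≤ ∫⁻ u, ((1 + δ) ^ e * ‖diffl l u φ x‖ₑ ^ e + C * ∑ j ∈ Finset.Icc 1 l,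
            (‖diffl l u φ (x + (j : ℝ) • h)‖ₑ ^ e + ‖diffl l h φ (x + (j : ℝ) • u)‖ₑ ^ e))
            ∂ballProb (Rn n) τ := lintegral_mono fun u => by simpa using hdiff φ x u h 0
      _ = (1 + δ) ^ e * diffMean l φ e τ x +
            C * (∑ j ∈ Finset.Icc 1 l, diffMean l φ e τ (x + (j : ℝ) • h) + R h) := by
          simp only [Finset.sum_add_distrib]
          rw [lintegral_add_left (by fun_prop), lintegral_const_mul _ (by fun_prop),
            lintegral_const_mul _ (by fun_prop), lintegral_add_left (by fun_prop),
            lintegral_finsetSum _ (by fun_prop), lintegral_finsetSum _ (by fun_prop)]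
          rfl
      _ = _ := by ring
  refine (lintegral_ballProb_le_of_le_add_sum l hρ (by fun_prop) (by fun_prop)
    fun h _ => hpointwise h).trans ?_
  rw [lintegral_add_left measurable_const, lintegral_const, measure_univ, mul_one, one_mul,
    lintegral_const_mul _ hR, add_assoc, mul_add, add_comm (C * ∫⁻ h, R h ∂_), mul_assoc C,
    mul_assoc C]
  gcongr
  exact lintegral_sum_lintegral_diffl_le l hφ hτ x

lemma exists_diffMean_two_mul_le {l : ℕ} (n : ℕ) (hl : 0 < l) (he : 0 < e) {δ : ℝ≥0∞}
    (hδ : δ ≠ 0) (hδ' : δ ≠ ∞) :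
    ∃ C : ℝ≥0∞, C ≠ ∞ ∧ ∀ φ : Rn n → ℝ, Measurable φ → ∀ {τ : ℝ}, 0 < τ → ∀ x,
      diffMean l φ e (2 * τ) x ≤ (1 + δ) ^ e * diffMean l φ e τ x +
        C * ballAvg (l * (2 * τ)) (diffMean l φ e (4 * τ)) x := by
  obtain ⟨C, hC, hcompare⟩ := exists_diffMean_le_add n l he hδ hδ'
  refine ⟨C * (4 ^ Module.finrank ℝ (Rn n) +
    2 ^ Module.finrank ℝ (Rn n) * 2 ^ Module.finrank ℝ (Rn n)), by finiteness,
    fun φ hφ τ hτ x => ?_⟩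
  have hfst : diffMean l φ e τ ≤
      fun y => 4 ^ Module.finrank ℝ (Rn n) * diffMean l φ e (4 * τ) y := fun y => by
    simpa using diffMean_le_of_le (K := 4) l φ e hτ (by linarith) le_rfl y
  have hsnd : diffMean l φ e (2 * τ) ≤
      fun y => 2 ^ Module.finrank ℝ (Rn n) * diffMean l φ e (4 * τ) y := fun y => by
    simpa using diffMean_le_of_le (K := 2) l φ e (by linarith) (by linarith) (by linarith) y
  have hradius : ballAvg (l * τ) (diffMean l φ e (2 * τ)) x ≤
      2 ^ Module.finrank ℝ (Rn n) * ballAvg (l * (2 * τ)) (diffMean l φ e (2 * τ)) x := by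
    simpa using ballAvg_le_of_le (K := 2) (ρ := l * τ) (σ := l * (2 * τ)) (by positivity)
      (by gcongr; linarith) (by linarith) _ x
  refine (hcompare φ hφ (by linarith) hτ x).trans ?_
  rw [mul_assoc C, add_mul, mul_assoc (2 ^ _)]
  rw [← ballAvg_const_mul _ _ (by fun_prop), ← ballAvg_const_mul _ (2 ^ _) (by fun_prop)]
  gcongr
  · exact ballAvg_mono _ hfst x
  · exact hradius.trans (by gcongr; exact ballAvg_mono _ hsnd x)

lemma lintegral_enorm_diffl_add_smul_le (l : ℕ) (hφ : Measurable φ) (e : ℝ) {j : ℕ}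
    (hj : j ∈ Finset.Icc 1 l) {σ : ℝ} (hσ : 0 < σ) {h : Rn n} (hh : ‖h‖ < σ) (y : Rn n) :
    ∫⁻ v, ‖diffl l (h + (j : ℝ) • v) φ y‖ₑ ^ e ∂ballProb (Rn n) σ ≤
      ENNReal.ofReal (l + 1) ^ Module.finrank ℝ (Rn n) * diffMean l φ e ((l + 1) * σ) y := by
  obtain ⟨hj1, hjl⟩ := Finset.mem_Icc.1 hj
  have hj1' : (1 : ℝ) ≤ j := mod_cast hj1
  have hjl' : (j : ℝ) ≤ l := mod_cast hjl
  rw [diffMean_eq_ballAvg, lintegral_ballProb_smul (f := fun u => ‖diffl l u φ y‖ₑ ^ e)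
    (by linarith) σ (by fun_prop)]
  refine ballAvg_le_of_dist_add_le (by positivity) ?_ ?_ _
  · calc dist h 0 + j * σ ≤ σ + l * σ := by rw [dist_zero_right]; gcongr
      _ = (l + 1) * σ := by ring
  · gcongr
    exact le_mul_of_one_le_left hσ.le hj1'

lemma exists_enorm_diffl_rpow_le_add_diffMean (n l : ℕ) (he : 0 < e) :
    ∃ C : ℝ≥0∞, C ≠ ∞ ∧ ∀ φ : Rn n → ℝ, Measurable φ → ∀ {σ : ℝ} {u h : Rn n}, 0 < σ →
      ‖u‖ < σ → ‖h‖ < σ → ∀ x, ‖diffl l h φ x‖ₑ ^ e ≤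
        2 ^ e * ‖diffl l u φ x‖ₑ ^ e + C * ∑ j ∈ Finset.Icc 1 l,
          (diffMean l φ e ((l + 1) * σ) (x + (j : ℝ) • h) +
            diffMean l φ e ((l + 1) * σ) (x + (j : ℝ) • u)) := by
  obtain ⟨C, hC, hdiff⟩ := exists_enorm_diffl_rpow_le l he one_ne_zero one_ne_top
  refine ⟨C * ENNReal.ofReal (l + 1) ^ Module.finrank ℝ (Rn n), by finiteness,
    fun φ hφ σ u h hσ hu hh x => ?_⟩
  have := isProbabilityMeasure_ballProb (E := Rn n) hσ
  calc ‖diffl l h φ x‖ₑ ^ e = ∫⁻ _v, ‖diffl l h φ x‖ₑ ^ e ∂ballProb (Rn n) σ := by simp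
    _ ≤ ∫⁻ v, ((1 + 1) ^ e * ‖diffl l u φ x‖ₑ ^ e + C * ∑ j ∈ Finset.Icc 1 l,
          (‖diffl l (u + (j : ℝ) • v) φ (x + (j : ℝ) • h)‖ₑ ^ e +
            ‖diffl l (h + (j : ℝ) • v) φ (x + (j : ℝ) • u)‖ₑ ^ e)) ∂ballProb (Rn n) σ :=
        lintegral_mono fun v => hdiff φ x u h v
    _ = 2 ^ e * ‖diffl l u φ x‖ₑ ^ e + C * ∑ j ∈ Finset.Icc 1 l,
          (∫⁻ v, ‖diffl l (u + (j : ℝ) • v) φ (x + (j : ℝ) • h)‖ₑ ^ e ∂ballProb (Rn n) σ +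
            ∫⁻ v, ‖diffl l (h + (j : ℝ) • v) φ (x + (j : ℝ) • u)‖ₑ ^ e ∂ballProb (Rn n) σ) := by
        rw [lintegral_add_left measurable_const, lintegral_const, measure_univ, mul_one,
          one_add_one_eq_two, lintegral_const_mul _ (by fun_prop),
          lintegral_finsetSum _ (by fun_prop)]
        congr! 3 with j
        exact lintegral_add_left (by fun_prop) _
    _ ≤ _ := by
        rw [mul_assoc C, Finset.mul_sum (a := ENNReal.ofReal _ ^ _)]
        gcongr with j hj
        rw [mul_add]
        exact add_le_add (lintegral_enorm_diffl_add_smul_le l hφ e hj hσ hu _)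
          (lintegral_enorm_diffl_add_smul_le l hφ e hj hσ hh _)

lemma exists_enorm_diffl_rpow_le_diffMean (n l : ℕ) (he : 0 < e) :
    ∃ C : ℝ≥0∞, C ≠ ∞ ∧ ∀ φ : Rn n → ℝ, Measurable φ → ∀ {σ : ℝ} {h : Rn n}, 0 < σ →
      ‖h‖ < σ → ∀ x, ‖diffl l h φ x‖ₑ ^ e ≤
        C * (diffMean l φ e ((l + 1) * σ) x + ballAvg (l * σ) (diffMean l φ e ((l + 1) * σ)) x) +
          C * ∑ j ∈ Finset.Icc 1 l, diffMean l φ e ((l + 1) * σ) (x + (j : ℝ) • h) := by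
  obtain ⟨C, hC, hdiff⟩ := exists_enorm_diffl_rpow_le_add_diffMean n l he
  set K := ENNReal.ofReal (l + 1) ^ Module.finrank ℝ (Rn n)
  set L := l * ENNReal.ofReal l ^ Module.finrank ℝ (Rn n)
  refine ⟨2 ^ e * K + C + C * L, by finiteness, fun φ hφ σ h hσ hh x => ?_⟩
  have := isProbabilityMeasure_ballProb (E := Rn n) hσ
  set F := diffMean l φ e ((l + 1) * σ)
  set S := ∑ j ∈ Finset.Icc 1 l, F (x + (j : ℝ) • h)
  have hF : diffMean l φ e σ x ≤ K * F x :=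
    diffMean_le_of_le l φ e hσ (le_mul_of_one_le_left hσ.le (by simp)) le_rfl x
  have hmean : ‖diffl l h φ x‖ₑ ^ e ≤
      2 ^ e * diffMean l φ e σ x + C * S + C * L * ballAvg (l * σ) F x := by
    have hint := lintegral_ballProb_le_of_le_add_sum l hσ (x := x) (f := F) (c := 1) (C := C)
      (A := fun _ => ‖diffl l h φ x‖ₑ ^ e)
      (B := fun u => 2 ^ e * ‖diffl l u φ x‖ₑ ^ e + C * S) (by fun_prop) (by fun_prop)
      fun u hu => (hdiff φ hφ hσ hu hh x).trans_eq (by rw [Finset.sum_add_distrib]; ring)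
    rwa [lintegral_const, measure_univ, mul_one, one_mul, lintegral_add_right _ measurable_const,
      lintegral_const, measure_univ, mul_one, lintegral_const_mul _ (by fun_prop)] at hint
  calc ‖diffl l h φ x‖ₑ ^ e ≤ 2 ^ e * (K * F x) + C * S + C * L * ballAvg (l * σ) F x := by
        refine hmean.trans ?_
        gcongr
    _ = 2 ^ e * K * F x + C * L * ballAvg (l * σ) F x + C * S := by ring
    _ ≤ (2 ^ e * K + C + C * L) * F x + (2 ^ e * K + C + C * L) * ballAvg (l * σ) F x +
          (2 ^ e * K + C + C * L) * S := by
        gcongr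
        · exact le_self_add.trans le_self_add
        · exact le_add_self
        · exact le_add_self.trans le_self_add
    _ = _ := by rw [mul_add]

lemma exists_diffMean_le_rpow {a b : ℝ} {l : ℕ} (n : ℕ) (hl : 0 < l) (ha : 0 < a)
    (hab : a ≤ b) :
    ∃ C : ℝ≥0∞, C ≠ ∞ ∧ ∀ φ : Rn n → ℝ, Measurable φ → ∀ {σ : ℝ}, 0 < σ → ∀ x,
      diffMean l φ b σ x ≤ C * (diffMean l φ a ((l + 1) * σ) x ^ (b / a) +
        ballAvg (l * σ) (fun y => diffMean l φ a ((l + 1) * σ) y ^ (b / a)) x) := by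
  obtain ⟨C, hC, hdiff⟩ := exists_enorm_diffl_rpow_le_diffMean n l ha
  have hs : 1 ≤ b / a := (one_le_div ha).2 hab
  have hs₀ : 0 < b / a := zero_lt_one.trans_le hs
  set s := b / a with hs_def
  set c := (1 + 1⁻¹) ^ s * (C ^ s * ((Finset.Icc 1 l).card : ℝ≥0∞) ^ s)
  set L := l * ENNReal.ofReal l ^ Module.finrank ℝ (Rn n)
  refine ⟨(1 + 1) ^ s * (C ^ s * 2 ^ s) + c * L, by finiteness, fun φ hφ σ hσ x => ?_⟩
  have := isProbabilityMeasure_ballProb (E := Rn n) hσ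
  set F := diffMean l φ a ((l + 1) * σ)
  set A := ballAvg (l * σ) (fun y => F y ^ s) x
  have hpow : (C * (F x + ballAvg (l * σ) F x)) ^ s ≤ C ^ s * 2 ^ s * (F x ^ s + A) := by
    rw [ENNReal.mul_rpow_of_nonneg _ _ hs₀.le, mul_assoc]
    gcongr
    refine (add_rpow_le_two_rpow_mul _ _ hs₀).trans ?_
    gcongr
    exact ballAvg_rpow_le hs (by positivity) (by fun_prop) x
  have hmean := lintegral_ballProb_le_of_le_add_sum l hσ (x := x) (f := fun y => F y ^ s)
    (c := (1 + 1) ^ s) (C := c) (A := fun h => ‖diffl l h φ x‖ₑ ^ b)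
    (B := fun _ => (C * (F x + ballAvg (l * σ) F x)) ^ s) (by fun_prop) (by fun_prop) fun h hh => by
      have hb : ‖diffl l h φ x‖ₑ ^ b = (‖diffl l h φ x‖ₑ ^ a) ^ s := by
        rw [← ENNReal.rpow_mul, hs_def, mul_div_cancel₀ _ ha.ne']
      rw [hb]
      exact rpow_le_of_le_add_mul_sum hs₀ one_ne_zero one_ne_top (hdiff φ hφ hσ hh x)
  rw [lintegral_const, measure_univ, mul_one] at hmean
  calc diffMean l φ b σ x
      ≤ (1 + 1) ^ s * (C ^ s * 2 ^ s * (F x ^ s + A)) + c * L * (F x ^ s + A) := by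
        refine hmean.trans ?_
        gcongr
        exact le_add_self
    _ = _ := by ring

end DifferenceMeans

/-! ### Averages in spaces with admissible weights -/

lemma lpPow_rpow {α : Type*} [MeasureSpace α] (W : α → ℝ≥0∞) (s P : ℝ) (f : α → ℝ≥0∞) :
    lpPow W P (fun x => f x ^ s) = lpPow W (s * P) f := by
  simp only [lpPow, ENNReal.rpow_mul]

lemma ae_ne_top_of_lpPow_ne_top {α : Type*} [MeasureSpace α] {W f : α → ℝ≥0∞} {P : ℝ}
    (hP : 0 < P) (hW : Measurable W) (hW₀ : ∀ x, W x ≠ 0) (hf : Measurable f)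
    (h : lpPow W P f ≠ ∞) : ∀ᵐ x, f x ≠ ∞ := by
  filter_upwards [ae_lt_top (by fun_prop) h] with x hx htop
  rw [htop, ENNReal.top_rpow_of_pos hP, ENNReal.mul_top (hW₀ x)] at hx
  exact hx.ne rfl

lemma BallAvgBounded.lpPow_le {E : Type*} [NormedAddCommGroup E] [MeasureSpace E]
    {W f g : E → ℝ≥0∞} {P ρ : ℝ} {K c : ℝ≥0∞} (h : BallAvgBounded W P ρ K) (hP : 0 < P)
    (hW : Measurable W) (hc : c ≠ ∞) (hf : Measurable f)
    (hg : ∀ x, g x ≤ c * (f x + ballAvg ρ f x)) :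
    lpPow W P g ≤ c ^ P * (2 ^ P * (1 + K)) * lpPow W P f := by
  calc lpPow W P g ≤ c ^ P * lpPow W P (fun x => f x + ballAvg ρ f x) :=
        lpPow_le_of_le hP.le hc hg
    _ ≤ c ^ P * (2 ^ P * (lpPow W P f + K * lpPow W P f)) := by
        gcongr
        exact (lpPow_add_le hP hW hf _).trans (by gcongr; exact h f hf)
    _ = _ := by ring

lemma AdmissibleWeights.exists_lpPow_tsum_le_tsum {E : Type*} [NormedAddCommGroup E]
    [MeasureSpace E] {W : ℕ → E → ℝ≥0∞} {P A₁ A₂ : ℝ} (hW : AdmissibleWeights W P A₁ A₂)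
    (hP : 0 < P) (hA₁ : 0 < A₁) :
    ∃ C : ℝ≥0∞, C ≠ ∞ ∧ ∀ (k : ℕ) {G : ℕ → E → ℝ≥0∞}, (∀ i, Measurable (G i)) →
      lpPow (W k) P (fun x => ∑' i : ℕ, 2 ^ (A₁ / (4 * P) * i) * G i x) ≤
        C * ∑' i : ℕ, 2 ^ (-(A₁ / 2 * i)) * lpPow (W (k + i)) P (G i) := by
  obtain ⟨C, hC, hsum⟩ := exists_lpPow_tsum_le (α := E) hP (θ := A₁ / 4) (by positivity)
  obtain ⟨D, hD, hdecay⟩ := hW.decay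
  refine ⟨C * D, by finiteness, fun k G hG => (hsum (hW.measurable k) (by fun_prop)).trans ?_⟩
  rw [mul_assoc, ← ENNReal.tsum_mul_left (a := D)]
  refine mul_le_mul_right (ENNReal.tsum_le_tsum fun i => ?_) _
  calc (2 : ℝ≥0∞) ^ (A₁ / 4 * i) * lpPow (W k) P (fun x => 2 ^ (A₁ / (4 * P) * i) * G i x)
      ≤ 2 ^ (A₁ / 4 * i) * ((2 ^ (A₁ / (4 * P) * i)) ^ P *
          (D * 2 ^ (-(A₁ * i)) * lpPow (W (k + i)) P (G i))) := by
        gcongr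
        refine (lpPow_le_of_le hP.le (by finiteness) fun x => le_rfl).trans ?_
        gcongr
        exact lpPow_le_of_weight_le (by finiteness) (hdecay k i)
    _ = D * (2 ^ (A₁ / 4 * i + A₁ / (4 * P) * i * P + -(A₁ * i)) *
          lpPow (W (k + i)) P (G i)) := by
        rw [ENNReal.rpow_add _ _ two_ne_zero ofNat_ne_top,
          ENNReal.rpow_add _ _ two_ne_zero ofNat_ne_top, ← ENNReal.rpow_mul]
        ring
    _ = _ := by
        congr 3
        field_simp
        ring

section AdmissibleWeights

variable {E : Type*} [NormedAddCommGroup E] [MeasureSpace E] [BorelSpace E] [NormedSpace ℝ E]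
  [FiniteDimensional ℝ E] [(volume : Measure E).IsAddHaarMeasure]

lemma ae_tendsto_zero_of_ae_ballAvg_tsum_ne_top {ρ : ℝ} (hρ : 0 < ρ) {f : ℕ → E → ℝ≥0∞}
    (hf : ∀ N, Measurable (f N)) (h : ∀ᵐ z, ballAvg ρ (fun x => ∑' N, f N x) z ≠ ∞) :
    ∀ᵐ x, Tendsto (fun N => f N x) atTop (nhds 0) := by
  refine measure_null_of_locally_null _ fun z _ => ?_
  obtain ⟨y, hy, hyz⟩ := (Measure.dense_of_ae h).exists_dist_lt z hρ
  refine ⟨_ ∩ Metric.ball y ρ, inter_mem_nhdsWithin _ (Metric.isOpen_ball.mem_nhds hyz), ?_⟩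
  rw [← Measure.restrict_apply' measurableSet_ball]
  have hfinite : ∫⁻ x in Metric.ball y ρ, ∑' N, f N x ≠ ∞ := fun htop => by
    rw [Set.mem_ofPred, ballAvg_eq, htop,
      ENNReal.mul_top (ENNReal.inv_ne_zero.2 measure_ball_lt_top.ne)] at hy
    exact hy rfl
  exact (ae_lt_top (.tsum hf) hfinite).mono fun x hx =>
    ENNReal.tendsto_atTop_zero_of_tsum_ne_top hx.ne

namespace AdmissibleWeights

variable {W : ℕ → E → ℝ≥0∞} {P A₁ A₂ : ℝ}

lemma exists_ballAvgBounded (hW : AdmissibleWeights W P A₁ A₂) (hP : 0 < P) {R : ℝ}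
    (hR : 0 < R) :
    ∃ C : ℝ≥0∞, C ≠ ∞ ∧ ∀ k, BallAvgBounded (W k) P (R * dyadicScale k) C := by
  obtain ⟨ε, hε, K, hK, htested⟩ := hW.tested
  obtain ⟨C, hC, hmul⟩ := exists_ballAvgBounded_mul E hP.le
    (K := (2 ^ Module.finrank ℝ E) ^ P * 2 ^ Module.finrank ℝ E * K) (by finiteness)
    (R := R * (2 / ε)) (by positivity)
  refine ⟨C, hC, fun k => ?_⟩
  have hscale := dyadicScale_pos k
  have hbase : BallAvgBounded (W k) P (ε / 2 * dyadicScale k) _ :=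
    TestedMuckenhoupt.ballAvgBounded (by convert htested k using 1; ring) (hW.measurable k) hP
      (by positivity)
  convert hmul (by positivity) hbase using 1
  field_simp

lemma exists_lpPow_ballAvg_le (hW : AdmissibleWeights W P A₁ A₂) (hP : 0 < P) {R : ℝ}
    (hR : 0 < R) {c : ℝ≥0∞} (hc : c ≠ ∞) :
    ∃ C : ℝ≥0∞, C ≠ ∞ ∧ ∀ (k : ℕ) {f g : E → ℝ≥0∞}, Measurable f → Measurable g →
      (∀ x, g x ≤ c * (f x + ballAvg (R * dyadicScale k) f x)) →
      lpPow (W k) P (ballAvg (dyadicScale k) g) ≤ C * lpPow (W k) P f := by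
  obtain ⟨K, hK, havg⟩ := hW.exists_ballAvgBounded hP one_pos
  obtain ⟨L, hL, havg'⟩ := hW.exists_ballAvgBounded hP hR
  simp only [one_mul] at havg
  refine ⟨K * (c ^ P * (2 ^ P * (1 + L))), by finiteness, fun k f g hf hg h => ?_⟩
  calc lpPow (W k) P (ballAvg (dyadicScale k) g) ≤ K * lpPow (W k) P g := havg k g hg
    _ ≤ K * (c ^ P * (2 ^ P * (1 + L)) * lpPow (W k) P f) := by
        gcongr
        exact (havg' k).lpPow_le hP (hW.measurable k) hc hf h
    _ = _ := by ring

end AdmissibleWeights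

end AdmissibleWeights

/-! ### Means of differences over cubes -/

section CubeMeans

variable {n : ℕ} {φ : Rn n → ℝ}

/-- The mean of `|Δ^l(h)φ(y)|^e` over `h ∈ 2^{-k} Iⁿ` and `y ∈ x + 2^{-(k+1)} Iⁿ`, i.e.
`δ^l_e(x + 2^{-(k+1)} Iⁿ)φ` to the power `e` up to a constant. -/
def cubeDiffMean (l : ℕ) (φ : Rn n → ℝ) (e : ℝ) (k : ℕ) : Rn n → ℝ≥0∞ :=
  ballAvg (dyadicScale (k + 1)) (diffMean l φ e (dyadicScale k))

@[fun_prop]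
lemma measurable_cubeDiffMean (l : ℕ) (hφ : Measurable φ) (e : ℝ) (k : ℕ) :
    Measurable (cubeDiffMean l φ e k) := by
  unfold cubeDiffMean
  fun_prop

lemma ballAvg_enorm_rpow_div_le {f : Rn n → ℝ} (hf : Measurable f) {a b p ρ : ℝ} (ha : 0 < a)
    (hab : a ≤ b) (hp : 0 ≤ p) (hρ : 0 < ρ) (x : Rn n) :
    ballAvg ρ (fun y => ‖f y‖ₑ ^ a) x ^ (p / a) ≤ ballAvg ρ (fun y => ‖f y‖ₑ ^ b) x ^ (p / b) := by
  have hb : 0 < b := ha.trans_le hab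
  have hjensen := ballAvg_rpow_le ((one_le_div ha).2 hab) hρ (f := fun y => ‖f y‖ₑ ^ a)
    (by fun_prop) x
  simp only [← ENNReal.rpow_mul, mul_div_cancel₀ _ ha.ne'] at hjensen
  calc ballAvg ρ (fun y => ‖f y‖ₑ ^ a) x ^ (p / a)
      = (ballAvg ρ (fun y => ‖f y‖ₑ ^ a) x ^ (b / a)) ^ (p / b) := by
        rw [← ENNReal.rpow_mul]
        congr 1
        field_simp
    _ ≤ _ := by gcongr

lemma diffMean_rpow_div_le (l : ℕ) (hφ : Measurable φ) {a b p ρ : ℝ} (ha : 0 < a) (hab : a ≤ b)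
    (hp : 0 ≤ p) (hρ : 0 < ρ) (x : Rn n) :
    diffMean l φ a ρ x ^ (p / a) ≤ diffMean l φ b ρ x ^ (p / b) := by
  simpa only [diffMean_eq_ballAvg] using
    ballAvg_enorm_rpow_div_le (f := fun h => diffl l h φ x) (by fun_prop) ha hab hp hρ 0

lemma exists_diffMean_dyadicScale_le (n : ℕ) {l : ℕ} (hl : 0 < l) {e η : ℝ} (he : 0 < e)
    (hη : 0 < η) :
    ∃ C : ℝ≥0∞, C ≠ ∞ ∧ ∀ φ : Rn n → ℝ, Measurable φ → ∀ k x,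
      diffMean l φ e (dyadicScale (k + 1)) x ≤
        2 ^ η * diffMean l φ e (dyadicScale (k + 2)) x +
          C * ballAvg (2 * l * dyadicScale (k + 1)) (cubeDiffMean l φ e k) x := by
  obtain ⟨C, hC, h⟩ := exists_diffMean_two_mul_le n hl he (δ := 2 ^ (η / e) - 1)
    (tsub_pos_of_lt (ENNReal.one_lt_rpow one_lt_two (by positivity))).ne' (by finiteness)
  have hpow : (1 + ((2 : ℝ≥0∞) ^ (η / e) - 1)) ^ e = 2 ^ η := by
    rw [add_tsub_cancel_of_le (ENNReal.one_le_rpow one_le_two (by positivity)),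
      ← ENNReal.rpow_mul, div_mul_cancel₀ _ he.ne']
  refine ⟨C * (2 ^ Module.finrank ℝ (Rn n)), by finiteness, fun φ hφ k x => ?_⟩
  have hscale := dyadicScale_pos (k + 1)
  have hl₁ : (1 : ℝ) ≤ l := mod_cast hl
  have hscale₁ : 2 * dyadicScale (k + 2) = dyadicScale (k + 1) := (dyadicScale_succ (k + 1)).symm
  have hscale₂ : 4 * dyadicScale (k + 2) = dyadicScale k := by
    rw [dyadicScale_succ k]
    linarith
  have hrec := h φ hφ (dyadicScale_pos (k + 2)) x
  rw [hpow, hscale₁, hscale₂] at hrec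
  refine hrec.trans ?_
  rw [mul_assoc C]
  gcongr
  simpa [cubeDiffMean] using ballAvg_le_ballAvg_ballAvg (R := l * dyadicScale (k + 1)) (K := 2)
    (L := 1) (ρ₁ := 2 * l * dyadicScale (k + 1)) (ρ₂ := dyadicScale (k + 1)) (by positivity) hscale
    (by nlinarith) le_rfl (by nlinarith) (by linarith) (by linarith)
    (measurable_diffMean l hφ e (dyadicScale k)) x

lemma ballAvg_one_diffMean_le (l : ℕ) (hφ : Measurable φ) (e : ℝ) (k : ℕ) (x : Rn n) :
    ballAvg 1 (diffMean l φ e (dyadicScale (k + 1))) x ≤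
      4 ^ Module.finrank ℝ (Rn n) * ballAvg 2 (cubeDiffMean l φ e k) x := by
  have hscale := dyadicScale_pos (k + 1)
  have hscale' := dyadicScale_le_one (k + 1)
  have hle : diffMean l φ e (dyadicScale (k + 1)) ≤ fun y =>
      2 ^ Module.finrank ℝ (Rn n) * diffMean l φ e (dyadicScale k) y := fun y => by
    simpa using diffMean_le_of_le (K := 2) l φ e hscale
      (by linarith [dyadicScale_succ k]) (dyadicScale_succ k).le y
  calc ballAvg 1 (diffMean l φ e (dyadicScale (k + 1))) x
      ≤ 2 ^ Module.finrank ℝ (Rn n) * ballAvg 1 (diffMean l φ e (dyadicScale k)) x := by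
        rw [← ballAvg_const_mul _ _ (by fun_prop)]
        exact ballAvg_mono _ hle x
    _ ≤ 2 ^ Module.finrank ℝ (Rn n) *
          (2 ^ Module.finrank ℝ (Rn n) * ballAvg 2 (cubeDiffMean l φ e k) x) := by
        gcongr
        simpa [cubeDiffMean] using ballAvg_le_ballAvg_ballAvg (R := 1) (K := 2) (L := 1) (ρ₁ := 2)
          (ρ₂ := dyadicScale (k + 1)) one_pos hscale (by linarith) le_rfl (by linarith)
          (by linarith) (by linarith) (measurable_diffMean l hφ e (dyadicScale k)) x
    _ = _ := by
        rw [← mul_assoc, ← mul_pow]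
        norm_num

end CubeMeans

/-! ### Iterated recursive inequalities -/

lemma le_sum_of_le_mul_succ_add {M G : ℕ → ℝ≥0∞} {c C : ℝ≥0∞}
    (h : ∀ k, M k ≤ c * M (k + 1) + C * G k) (k j : ℕ) :
    M k ≤ c ^ j * M (k + j) + C * ∑ i ∈ Finset.range j, c ^ i * G (k + i) := by
  induction j with
  | zero => simp
  | succ j ih =>
    calc M k ≤ c ^ j * (c * M (k + j + 1) + C * G (k + j)) +
          C * ∑ i ∈ Finset.range j, c ^ i * G (k + i) := by
          refine ih.trans ?_
          gcongr
          exact h _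
      _ = _ := by
          rw [Finset.sum_range_succ, ← add_assoc k]
          ring

lemma le_tsum_of_le_mul_succ_add {M G : ℕ → ℝ≥0∞} {c C : ℝ≥0∞} (hc : 1 ≤ c)
    (h : ∀ k, M k ≤ c * M (k + 1) + C * G k)
    (hlim : Tendsto (fun N => c ^ N * M N) atTop (nhds 0)) (k : ℕ) :
    M k ≤ C * ∑' i, c ^ i * G (k + i) := by
  have hlim' := hlim.add_const (C * ∑' i, c ^ i * G (k + i))
  rw [zero_add] at hlim'
  refine ge_of_tendsto hlim' ?_
  filter_upwards [eventually_ge_atTop k] with N hN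
  obtain ⟨j, rfl⟩ := Nat.exists_eq_add_of_le hN
  refine (le_sum_of_le_mul_succ_add h k j).trans ?_
  gcongr
  · lia
  · exact ENNReal.sum_le_tsum _

/-! ### Estimates between the two kinds of means -/

lemma exists_enorm_rpow_le_diffMean_add_ballAvg (n : ℕ) {l : ℕ} (hl : 0 < l) {a : ℝ} (ha : 0 < a) :
    ∃ C : ℝ≥0∞, C ≠ ∞ ∧ ∀ {φ : Rn n → ℝ}, Measurable φ → ∀ x,
      ‖φ x‖ₑ ^ a ≤
        C * (diffMean l φ a (dyadicScale 1) x + ballAvg 1 (fun y => ‖φ y‖ₑ ^ a) x) := by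
  have hl₁ : (1 : ℝ) ≤ l := mod_cast hl
  obtain ⟨c, hc, hpointwise⟩ := exists_diffMean_le_enorm n l ha
  set d := Module.finrank ℝ (Rn n)
  refine ⟨c * (ENNReal.ofReal l ^ d + 2 ^ d), by finiteness, fun {φ} hφ x => ?_⟩
  set F := diffMean l φ a (dyadicScale 1) x
  set G := ballAvg 1 (fun y => ‖φ y‖ₑ ^ a) x
  have hscale : dyadicScale 1 = 1 / 2 := by norm_num [dyadicScale]
  have hdiff : diffMean l φ a (1 / (2 * l)) x ≤ ENNReal.ofReal l ^ d * F :=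
    diffMean_le_of_le l φ a (by positivity)
      (by rw [hscale]; gcongr; linarith) (by rw [hscale]; field_simp; rfl) x
  have havg : ballAvg (l * (1 / (2 * l))) (fun y => ‖φ y‖ₑ ^ a) x ≤ 2 ^ d * G := by
    rw [show (l : ℝ) * (1 / (2 * l)) = 1 / 2 by field_simp]
    simpa [d] using ballAvg_le_of_le (K := 2) (ρ := 1 / 2) (σ := 1) (by norm_num) (by norm_num)
      (by norm_num) (fun y => ‖φ y‖ₑ ^ a) x
  calc ‖φ x‖ₑ ^ a ≤ c * (ENNReal.ofReal l ^ d * F + 2 ^ d * G) :=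
        ((hpointwise φ hφ (ρ := 1 / (2 * l)) (by positivity) x).2).trans (by gcongr)
    _ ≤ c * ((ENNReal.ofReal l ^ d + 2 ^ d) * F + (ENNReal.ofReal l ^ d + 2 ^ d) * G) := by
        gcongr
        exacts [le_self_add, le_add_self]
    _ = _ := by ring

namespace AdmissibleWeights

variable {n l : ℕ} {W : ℕ → Rn n → ℝ≥0∞} {P p a b A₁ A₂ : ℝ}

lemma ae_tendsto_zero_of_lpPow_cubeDiffMean_le (hW : AdmissibleWeights W P A₁ A₂) (hP : 0 < P)
    (hA₁ : 0 < A₁) {φ : Rn n → ℝ} (hφ : Measurable φ) {e : ℝ} {B : ℝ≥0∞} (hB : B ≠ ∞)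
    (h : ∀ k, lpPow (W (k + 1)) P (cubeDiffMean l φ e k) ≤ B) :
    ∀ᵐ x, Tendsto (fun N : ℕ => 2 ^ (A₁ / (4 * P) * N) * diffMean l φ e (dyadicScale (N + 1)) x)
      atTop (nhds 0) := by
  obtain ⟨K, hK, havg⟩ := hW.exists_ballAvgBounded hP (R := 4) (by norm_num)
  obtain ⟨C, hC, hsum⟩ := hW.exists_lpPow_tsum_le_tsum hP hA₁
  set G : Rn n → ℝ≥0∞ := fun x => ∑' N : ℕ, 2 ^ (A₁ / (4 * P) * N) * cubeDiffMean l φ e N x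
  have hG : Measurable G := .tsum fun N => by fun_prop
  have hGfinite : lpPow (W 1) P G ≠ ∞ := by
    refine ne_top_of_le_ne_top ?_ (hsum 1 fun i => measurable_cubeDiffMean l hφ e i)
    refine ENNReal.mul_ne_top hC (ne_top_of_le_ne_top
      (ENNReal.mul_ne_top (tsum_two_rpow_neg_mul_ne_top (half_pos hA₁)) hB) ?_)
    rw [← ENNReal.tsum_mul_right]
    refine ENNReal.tsum_le_tsum fun i => mul_le_mul_right ?_ _
    rw [add_comm 1 i]
    exact h i
  have havgfinite : ∀ᵐ z, ballAvg 2 G z ≠ ∞ := by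
    refine ae_ne_top_of_lpPow_ne_top hP (hW.measurable 1) (hW.ne_zero 1) (by fun_prop) ?_
    have hradius : 4 * dyadicScale 1 = 2 := by norm_num [dyadicScale]
    have hbound := havg 1 G hG
    rw [hradius] at hbound
    exact ne_top_of_le_ne_top (by finiteness) hbound
  refine ae_tendsto_zero_of_ae_ballAvg_tsum_ne_top one_pos (by fun_prop) ?_
  filter_upwards [havgfinite] with z hz
  refine ne_top_of_le_ne_top (b := 4 ^ Module.finrank ℝ (Rn n) * ballAvg 2 G z)
    (by finiteness) ?_
  simp only [G, ballAvg]
  rw [lintegral_tsum fun N => by fun_prop, lintegral_tsum fun N => by fun_prop,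
    ← ENNReal.tsum_mul_left]
  refine ENNReal.tsum_le_tsum fun N => ?_
  rw [lintegral_const_mul _ (by fun_prop), lintegral_const_mul _ (by fun_prop), mul_left_comm]
  exact mul_le_mul_right (ballAvg_one_diffMean_le l hφ e N z) _

lemma exists_lpPow_diffMean_le_tsum (hW : AdmissibleWeights W (p / b) A₁ A₂) (hA₁ : 0 < A₁)
    (hl : 0 < l) (hp : 0 < p) (ha : 0 < a) (hab : a ≤ b) :
    ∃ C : ℝ≥0∞, C ≠ ∞ ∧ ∀ {φ : Rn n → ℝ}, Measurable φ → ∀ {B : ℝ≥0∞}, B ≠ ∞ →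
      (∀ k, lpPow (W (k + 1)) (p / b) (cubeDiffMean l φ b k) ≤ B) → ∀ k,
      lpPow (W (k + 1)) (p / a) (diffMean l φ a (dyadicScale (k + 1))) ≤
        C * ∑' i : ℕ, 2 ^ (-(A₁ / 2 * i)) *
          lpPow (W (k + i + 1)) (p / b) (cubeDiffMean l φ b (k + i)) := by
  have hb : 0 < b := ha.trans_le hab
  have hP : 0 < p / b := by positivity
  obtain ⟨C, hC, hrec⟩ := exists_diffMean_dyadicScale_le n hl hb
    (η := A₁ / (4 * (p / b))) (by positivity)
  obtain ⟨D, hD, hsum⟩ := hW.exists_lpPow_tsum_le_tsum hP hA₁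
  obtain ⟨K, hK, havg⟩ := hW.exists_ballAvgBounded hP (R := 2 * l) (by positivity)
  set η := A₁ / (4 * (p / b))
  refine ⟨C ^ (p / b) * (D * K), by finiteness, fun {φ} hφ {B} hB h k => ?_⟩
  set G : ℕ → Rn n → ℝ≥0∞ := fun i =>
    ballAvg (2 * l * dyadicScale (k + 1 + i)) (cubeDiffMean l φ b (k + i))
  have hpow : ∀ i : ℕ, ((2 : ℝ≥0∞) ^ η) ^ i = 2 ^ (η * i) := fun i => by
    rw [← ENNReal.rpow_natCast, ← ENNReal.rpow_mul]
  have hpointwise : ∀ᵐ x, diffMean l φ b (dyadicScale (k + 1)) x ≤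
      C * ∑' i : ℕ, 2 ^ (η * i) * G i x := by
    filter_upwards [hW.ae_tendsto_zero_of_lpPow_cubeDiffMean_le hP hA₁ hφ hB h] with x hx
    have hiter := le_tsum_of_le_mul_succ_add (c := 2 ^ η)
      (ENNReal.one_le_rpow one_le_two (by positivity)) (fun k => hrec φ hφ k x)
      (by simpa only [hpow] using hx) k
    simpa only [hpow, G, add_right_comm k 1] using hiter
  calc lpPow (W (k + 1)) (p / a) (diffMean l φ a (dyadicScale (k + 1)))
      ≤ lpPow (W (k + 1)) (p / b) (diffMean l φ b (dyadicScale (k + 1))) :=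
        lintegral_mono fun x => mul_le_mul_right
          (diffMean_rpow_div_le l hφ ha hab hp.le (dyadicScale_pos _) x) _
    _ ≤ C ^ (p / b) * lpPow (W (k + 1)) (p / b) (fun x => ∑' i : ℕ, 2 ^ (η * i) * G i x) :=
        lpPow_le_of_ae_le hP.le (by finiteness) hpointwise
    _ ≤ C ^ (p / b) * (D * ∑' i : ℕ, 2 ^ (-(A₁ / 2 * i)) *
          (K * lpPow (W (k + i + 1)) (p / b) (cubeDiffMean l φ b (k + i)))) := by
        gcongr
        refine (hsum (k + 1) fun i => by fun_prop).trans
          (mul_le_mul_right (ENNReal.tsum_le_tsum fun i => mul_le_mul_right ?_ _) _)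
        rw [add_right_comm k i 1]
        exact havg _ _ (measurable_cubeDiffMean l hφ b (k + i))
    _ = _ := by
        simp only [mul_left_comm _ K, ENNReal.tsum_mul_left]
        ring

lemma exists_lpPow_cubeDiffMean_le (hW : AdmissibleWeights W (p / b) A₁ A₂) (hl : 0 < l)
    (hp : 0 < p) (ha : 0 < a) (hab : a ≤ b) :
    ∃ C : ℝ≥0∞, C ≠ ∞ ∧ ∀ {φ : Rn n → ℝ}, Measurable φ → ∀ i,
      lpPow (W (i + l + 2)) (p / b) (cubeDiffMean l φ b (i + l + 1)) ≤
        C * lpPow (W (i + 1)) (p / a) (diffMean l φ a (dyadicScale (i + 1))) := by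
  have hb : 0 < b := ha.trans_le hab
  have hP : 0 < p / b := by positivity
  have hl₁ : (1 : ℝ) ≤ l := mod_cast hl
  obtain ⟨c, hc, hpointwise⟩ := exists_diffMean_le_rpow n hl ha hab
  obtain ⟨C, hC, havg⟩ := hW.exists_lpPow_ballAvg_le hP (R := l * 2) (by positivity) hc
  obtain ⟨D, hD, hgrowth⟩ := hW.growth
  refine ⟨C * (D * 2 ^ (A₂ * (l + 1 : ℕ)) *
    (ENNReal.ofReal (2 ^ l) ^ Module.finrank ℝ (Rn n)) ^ (p / a)), by finiteness,
    fun {φ} hφ i => ?_⟩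
  set σ := dyadicScale (i + l + 1) with hσ
  have hσ₀ : 0 < σ := dyadicScale_pos _
  have hσ_half : (l : ℝ) * σ = l * 2 * dyadicScale (i + l + 2) := by
    rw [hσ, dyadicScale_succ]
    ring
  have hσ_scale : dyadicScale (i + 1) = 2 ^ l * σ := by
    rw [hσ, add_right_comm, ← dyadicScale_eq_mul]
  have hpow : (l : ℝ) + 1 ≤ 2 ^ l := mod_cast Nat.lt_two_pow_self (n := l)
  calc lpPow (W (i + l + 2)) (p / b) (cubeDiffMean l φ b (i + l + 1))
      ≤ C * lpPow (W (i + l + 2)) (p / b) (fun x => diffMean l φ a ((l + 1) * σ) x ^ (b / a)) :=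
        havg _ (by fun_prop) (by fun_prop) fun x => hσ_half ▸ hpointwise φ hφ hσ₀ x
    _ = C * lpPow (W (i + 1 + (l + 1))) (p / a) (diffMean l φ a ((l + 1) * σ)) := by
        rw [lpPow_rpow, show b / a * (p / b) = p / a by field_simp,
          show i + l + 2 = i + 1 + (l + 1) by ring]
    _ ≤ C * (D * 2 ^ (A₂ * (l + 1 : ℕ)) *
          ((ENNReal.ofReal (2 ^ l) ^ Module.finrank ℝ (Rn n)) ^ (p / a) *
            lpPow (W (i + 1)) (p / a) (diffMean l φ a (dyadicScale (i + 1))))) := by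
        gcongr
        refine (lpPow_le_of_weight_le (by finiteness) (hgrowth (i + 1) (l + 1))).trans ?_
        gcongr
        refine lpPow_le_of_le (by positivity) (by finiteness)
          (diffMean_le_of_le l φ a (by positivity) ?_ ?_)
        · rw [hσ_scale]
          gcongr
        · rw [hσ_scale]
          gcongr
          exact le_mul_of_one_le_left hσ₀.le (by linarith)
    _ = _ := by ring

lemma exists_lpPow_enorm_le (hW : AdmissibleWeights W P A₁ A₂) (hl : 0 < l) (hp : 0 < p)
    (ha : 0 < a) :
    ∃ C : ℝ≥0∞, C ≠ ∞ ∧ ∀ {φ : Rn n → ℝ}, Measurable φ →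
      lpPow (W 0) p (fun x => ‖φ x‖ₑ) ≤
        C * (lpPow (W 1) (p / a) (diffMean l φ a (dyadicScale 1)) +
          lpPow (W 0) (p / a) (ballAvg 1 fun y => ‖φ y‖ₑ ^ a)) := by
  have hP : 0 < p / a := by positivity
  obtain ⟨c, hc, hbound⟩ := exists_enorm_rpow_le_diffMean_add_ballAvg n hl ha
  obtain ⟨D, hD, hdecay⟩ := hW.decay
  refine ⟨c ^ (p / a) * 2 ^ (p / a) * (D * 2 ^ (-(A₁ * (1 : ℕ))) + 1), by finiteness,
    fun {φ} hφ => ?_⟩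
  set F := diffMean l φ a (dyadicScale 1)
  set G := ballAvg 1 fun y => ‖φ y‖ₑ ^ a
  calc lpPow (W 0) p (fun x => ‖φ x‖ₑ)
      = lpPow (W 0) (p / a) (fun x => ‖φ x‖ₑ ^ a) := by rw [lpPow_rpow, mul_div_cancel₀ _ ha.ne']
    _ ≤ c ^ (p / a) * (2 ^ (p / a) * (lpPow (W 0) (p / a) F + lpPow (W 0) (p / a) G)) :=
        (lpPow_le_of_le hP.le (by finiteness) (hbound hφ)).trans
          (by gcongr; exact lpPow_add_le hP (hW.measurable 0) (by fun_prop) _)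
    _ ≤ c ^ (p / a) * (2 ^ (p / a) * ((D * 2 ^ (-(A₁ * (1 : ℕ))) + 1) *
          lpPow (W 1) (p / a) F + (D * 2 ^ (-(A₁ * (1 : ℕ))) + 1) * lpPow (W 0) (p / a) G)) := by
        gcongr
        · refine (lpPow_le_of_weight_le (by finiteness) (hdecay 0 1)).trans ?_
          gcongr
          exact le_self_add
        · exact le_mul_of_one_le_left' le_add_self
    _ = _ := by ring

lemma exists_lpPow_cubeDiffMean_le_enorm (hW : AdmissibleWeights W (p / b) A₁ A₂) (hl : 0 < l)
    (hp : 0 < p) (hb : 0 < b) :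
    ∃ C : ℝ≥0∞, C ≠ ∞ ∧ ∀ {φ : Rn n → ℝ}, Measurable φ → ∀ k ≤ l,
      lpPow (W (k + 1)) (p / b) (cubeDiffMean l φ b k) ≤ C * lpPow (W 0) p fun x => ‖φ x‖ₑ := by
  have hP : 0 < p / b := by positivity
  obtain ⟨c, hc, hpointwise⟩ := exists_diffMean_le_enorm n l hb
  obtain ⟨C, hC, havg⟩ := hW.exists_lpPow_ballAvg_le hP (R := l * 2) (by positivity) hc
  obtain ⟨D, hD, hgrowth⟩ := hW.growth
  refine ⟨C * (D * 2 ^ (|A₂| * (l + 1 : ℕ))), by finiteness, fun {φ} hφ k hk => ?_⟩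
  have hscale : (l : ℝ) * dyadicScale k = l * 2 * dyadicScale (k + 1) := by
    rw [dyadicScale_succ k]
    ring
  calc lpPow (W (k + 1)) (p / b) (cubeDiffMean l φ b k)
      ≤ C * lpPow (W (k + 1)) (p / b) (fun x => ‖φ x‖ₑ ^ b) :=
        havg _ (by fun_prop) (by fun_prop)
          fun x => hscale ▸ (hpointwise φ hφ (dyadicScale_pos k) x).1
    _ ≤ C * (D * 2 ^ (|A₂| * (l + 1 : ℕ)) * lpPow (W 0) (p / b) (fun x => ‖φ x‖ₑ ^ b)) := by
        gcongr
        refine lpPow_le_of_weight_le (by finiteness) fun x => ?_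
        have hgrowth' := hgrowth 0 (k + 1) x
        rw [zero_add] at hgrowth'
        refine hgrowth'.trans (mul_le_mul_left (mul_le_mul_right ?_ _) _)
        exact ENNReal.rpow_le_rpow_of_exponent_le one_le_two (by gcongr; exact le_abs_self A₂)
    _ = _ := by
        rw [lpPow_rpow, mul_div_cancel₀ _ hb.ne']
        ring

lemma exists_lpPow_ballAvg_one_le_enorm (hW : AdmissibleWeights W (p / b) A₁ A₂) (hp : 0 < p)
    (hb : 0 < b) :
    ∃ C : ℝ≥0∞, C ≠ ∞ ∧ ∀ {φ : Rn n → ℝ}, Measurable φ →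
      lpPow (W 0) (p / b) (ballAvg 1 fun y => ‖φ y‖ₑ ^ b) ≤
        C * lpPow (W 0) p fun x => ‖φ x‖ₑ := by
  obtain ⟨C, hC, havg⟩ := hW.exists_ballAvgBounded (div_pos hp hb) one_pos
  refine ⟨C, hC, fun {φ} hφ => ?_⟩
  have hbound := havg 0 (fun y => ‖φ y‖ₑ ^ b) (by fun_prop)
  rwa [dyadicScale_zero, mul_one, lpPow_rpow, mul_div_cancel₀ _ hb.ne'] at hbound

end AdmissibleWeights

/-! ### Sequence quasi-norms -/

lemma lqNorm_top {ι : Type*} (c : ι → ℝ≥0∞) : lqNorm ∞ c = ⨆ i, c i := if_pos rfl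

lemma lqNorm_of_ne_top {ι : Type*} {q : ℝ≥0∞} (hq : q ≠ ∞) (c : ι → ℝ≥0∞) :
    lqNorm q c = (∑' i, c i ^ q.toReal) ^ q.toReal⁻¹ := by
  rw [lqNorm, if_neg hq, one_div]

lemma lqNorm_const_mul {ι : Type*} {q : ℝ≥0∞} (hq : q ≠ 0) (c : ℝ≥0∞) (y : ι → ℝ≥0∞) :
    lqNorm q (fun i => c * y i) = c * lqNorm q y := by
  rcases eq_or_ne q ∞ with rfl | hq'
  · simp only [lqNorm_top, ENNReal.mul_iSup]
  · have hq₀ := ENNReal.toReal_pos hq hq'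
    simp only [lqNorm_of_ne_top hq', ENNReal.mul_rpow_of_nonneg _ _ hq₀.le]
    rw [ENNReal.tsum_mul_left, ENNReal.mul_rpow_of_nonneg _ _ (by positivity),
      ENNReal.rpow_rpow_inv hq₀.ne']

lemma le_lqNorm {ι : Type*} {q : ℝ≥0∞} (hq : q ≠ 0) (y : ι → ℝ≥0∞) (i : ι) :
    y i ≤ lqNorm q y := by
  rcases eq_or_ne q ∞ with rfl | hq'
  · exact lqNorm_top y ▸ le_iSup y i
  · rw [lqNorm_of_ne_top hq', ENNReal.le_rpow_inv_iff (ENNReal.toReal_pos hq hq')]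
    exact ENNReal.le_tsum i

lemma exists_lqNorm_le_of_shift {q : ℝ≥0∞} (hq : q ≠ 0) (N : ℕ) {D : ℝ≥0∞} (hD : D ≠ ∞) :
    ∃ C : ℝ≥0∞, C ≠ ∞ ∧ ∀ {x y : ℕ → ℝ≥0∞} {z : ℝ≥0∞}, (∀ i, y (i + N) ≤ D * x i) →
      (∀ k < N, y k ≤ D * z) → lqNorm q x ≤ z → lqNorm q y ≤ C * z := by
  rcases eq_or_ne q ∞ with rfl | hq'
  · refine ⟨D, hD, fun {x y z} htail hhead hx => ?_⟩
    rw [lqNorm_top]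
    refine iSup_le fun k => ?_
    rcases lt_or_ge k N with hk | hk
    · exact hhead k hk
    · obtain ⟨i, rfl⟩ := Nat.exists_eq_add_of_le' hk
      exact (htail i).trans (mul_le_mul_right ((le_lqNorm hq x i).trans hx) _)
  · have hq₀ := ENNReal.toReal_pos hq hq'
    set s := q.toReal
    refine ⟨((N + 1) * D ^ s) ^ s⁻¹, by finiteness, fun {x y z} htail hhead hx => ?_⟩
    rw [lqNorm_of_ne_top hq', ENNReal.rpow_inv_le_iff hq₀] at hx
    rw [lqNorm_of_ne_top hq', ENNReal.rpow_inv_le_iff hq₀, ENNReal.mul_rpow_of_nonneg _ _ hq₀.le,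
      ENNReal.rpow_inv_rpow hq₀.ne']
    calc ∑' k, y k ^ s = ∑ k ∈ Finset.range N, y k ^ s + ∑' i, y (i + N) ^ s :=
          (ENNReal.summable.sum_add_tsum_nat_add' (f := fun k => y k ^ s)).symm
      _ ≤ ∑ _ ∈ Finset.range N, (D * z) ^ s + ∑' i, (D * x i) ^ s := by
          gcongr with k hk i
          · exact hhead k (Finset.mem_range.1 hk)
          · exact htail i
      _ ≤ N * (D * z) ^ s + D ^ s * z ^ s := by
          simp only [Finset.sum_const, Finset.card_range, nsmul_eq_mul,
            ENNReal.mul_rpow_of_nonneg D _ hq₀.le, ENNReal.tsum_mul_left]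
          gcongr
      _ = _ := by
          rw [ENNReal.mul_rpow_of_nonneg _ _ hq₀.le]
          ring

lemma exists_lqNorm_le_of_le_tsum {q : ℝ≥0∞} (hq : q ≠ 0) {κ : ℝ} (hκ : 0 < κ) {D : ℝ≥0∞}
    (hD : D ≠ ∞) :
    ∃ C : ℝ≥0∞, C ≠ ∞ ∧ ∀ {x y : ℕ → ℝ≥0∞},
      (∀ k, x k ≤ D * ∑' i : ℕ, 2 ^ (-(κ * i)) * y (k + i)) → lqNorm q x ≤ C * lqNorm q y := by
  rcases eq_or_ne q ∞ with rfl | hq'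
  · have hgeom := tsum_two_rpow_neg_mul_ne_top hκ
    refine ⟨D * ∑' i : ℕ, 2 ^ (-(κ * i)), by finiteness, fun {x y} h => ?_⟩
    rw [lqNorm_top x, mul_assoc, ← ENNReal.tsum_mul_right]
    exact iSup_le fun k => (h k).trans <| mul_le_mul_right
      (ENNReal.tsum_le_tsum fun i => mul_le_mul_right (le_lqNorm hq y _) _) _
  · have hq₀ := ENNReal.toReal_pos hq hq'
    set s := q.toReal
    have hθ : 0 < κ * s / 2 := by positivity
    have hgeom := tsum_two_rpow_neg_mul_ne_top hθ
    obtain ⟨K, hK, hsum⟩ := exists_tsum_rpow_le hθ hq₀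
    refine ⟨(D ^ s * K * ∑' i : ℕ, 2 ^ (-(κ * s / 2 * i))) ^ s⁻¹, by finiteness,
      fun {x y} h => ?_⟩
    have hterm : ∀ k, x k ^ s ≤ D ^ s * K * ∑' i : ℕ, 2 ^ (-(κ * s / 2 * i)) * y (k + i) ^ s := by
      intro k
      refine (ENNReal.rpow_le_rpow (h k) hq₀.le).trans ?_
      rw [ENNReal.mul_rpow_of_nonneg _ _ hq₀.le, mul_assoc]
      refine mul_le_mul_right ((hsum _).trans_eq (congrArg _ (tsum_congr fun i => ?_))) _
      rw [ENNReal.mul_rpow_of_nonneg _ _ hq₀.le, ← ENNReal.rpow_mul, ← mul_assoc,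
        ← ENNReal.rpow_add _ _ two_ne_zero ofNat_ne_top]
      congr 2
      ring
    rw [lqNorm_of_ne_top hq', lqNorm_of_ne_top hq',
      ← ENNReal.mul_rpow_of_nonneg _ _ (by positivity)]
    refine ENNReal.rpow_le_rpow ?_ (by positivity)
    calc ∑' k, x k ^ s
        ≤ ∑' k, D ^ s * K * ∑' i : ℕ, 2 ^ (-(κ * s / 2 * i)) * y (k + i) ^ s :=
          ENNReal.tsum_le_tsum hterm
      _ = D ^ s * K * ∑' i : ℕ, 2 ^ (-(κ * s / 2 * i)) * ∑' k, y (k + i) ^ s := by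
          rw [ENNReal.tsum_mul_left, ENNReal.tsum_comm]
          simp only [ENNReal.tsum_mul_left]
      _ ≤ D ^ s * K * ∑' i : ℕ, 2 ^ (-(κ * s / 2 * i)) * ∑' k, y k ^ s :=
          mul_le_mul_right (ENNReal.tsum_le_tsum fun i => mul_le_mul_right
            (ENNReal.tsum_comp_le_tsum_of_injective (add_left_injective i) fun k => y k ^ s) _) _
      _ = _ := by rw [ENNReal.tsum_mul_right, mul_assoc (D ^ s * K)]

lemma exists_lqNorm_rpow_inv_le_of_le_tsum {q : ℝ≥0∞} (hq : q ≠ 0) {p κ : ℝ} (hp : 0 < p)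
    (hκ : 0 < κ) {D : ℝ≥0∞} (hD : D ≠ ∞) :
    ∃ C : ℝ≥0∞, C ≠ ∞ ∧ ∀ {x y : ℕ → ℝ≥0∞},
      (∀ k, x k ≤ D * ∑' i : ℕ, 2 ^ (-(κ * i)) * y (k + i)) →
      lqNorm q (fun k => x k ^ p⁻¹) ≤ C * lqNorm q (fun k => y k ^ p⁻¹) := by
  have hp' : 0 < p⁻¹ := by positivity
  obtain ⟨K, hK, hsum⟩ := exists_tsum_rpow_le (show 0 < κ * p⁻¹ / 2 by positivity) hp'
  obtain ⟨C, hC, hbound⟩ := exists_lqNorm_le_of_le_tsum hq (κ := κ * p⁻¹ / 2) (by positivity)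
    (D := D ^ p⁻¹ * K) (by finiteness)
  refine ⟨C, hC, fun {x y} h => hbound fun k => ?_⟩
  refine (ENNReal.rpow_le_rpow (h k) hp'.le).trans ?_
  rw [ENNReal.mul_rpow_of_nonneg _ _ hp'.le, mul_assoc]
  refine mul_le_mul_right ((hsum _).trans_eq (congrArg _ (tsum_congr fun i => ?_))) _
  rw [ENNReal.mul_rpow_of_nonneg _ _ hp'.le, ← ENNReal.rpow_mul, ← mul_assoc,
    ← ENNReal.rpow_add _ _ two_ne_zero ofNat_ne_top]
  congr 2
  ring

/-! ### The quasi-norms in terms of means -/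

section

variable {n l : ℕ} {p q r : ℝ≥0∞} {φ : Rn n → ℝ}

/-- The quasi-norm of a sequence `F` of means of `e`-th powers, together with the local
`L_e` means of `φ` itself, for weights `W` that already carry the power `p`. -/
def meansNorm (W : ℕ → Rn n → ℝ≥0∞) (q : ℝ≥0∞) (p e : ℝ) (φ : Rn n → ℝ)
    (F : ℕ → Rn n → ℝ≥0∞) : ℝ≥0∞ :=
  lqNorm q (fun k => lpPow (W (k + 1)) (p / e) (F k) ^ p⁻¹) +
    lpPow (W 0) (p / e) (ballAvg 1 fun y => ‖φ y‖ₑ ^ e) ^ p⁻¹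

lemma setLIntegral_ball_eq {ρ : ℝ} (hρ : 0 < ρ) (f : Rn n → ℝ≥0∞) (x : Rn n) :
    ∫⁻ y in Metric.ball x ρ, f y = 2 ^ n * ENNReal.ofReal ρ ^ n * ballAvg ρ f x := by
  rw [ballAvg_eq, ← mul_assoc, Real.volume_pi_ball _ hρ, Fintype.card_fin,
    ENNReal.ofReal_pow (by positivity), ENNReal.ofReal_mul zero_le_two, ENNReal.ofReal_ofNat,
    ← mul_pow, ENNReal.mul_inv_cancel (by simp [hρ]) (by finiteness), one_mul]

lemma rpow_neg_div_mul_rpow {S : ℝ≥0∞} (hS : S ≠ 0) (hS' : S ≠ ∞) {e : ℝ} (he : 0 < e) (m : ℕ)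
    (Y : ℝ≥0∞) : S ^ (-(m : ℝ) / e) * (S ^ m * Y) ^ (1 / e) = Y ^ (1 / e) := by
  rw [ENNReal.mul_rpow_of_nonneg _ _ (by positivity), ← mul_assoc, ← ENNReal.rpow_natCast,
    ← ENNReal.rpow_mul, ← ENNReal.rpow_add _ _ hS hS', show -(m : ℝ) / e + m * (1 / e) = 0 by ring,
    ENNReal.rpow_zero, one_mul]

lemma barDelta_eq (hr : r ≠ 0) (hr' : r ≠ ∞) {ρ : ℝ} (hρ : 0 < ρ) (x : Rn n) :
    barDelta n l r ρ φ x = (2 ^ n * diffMean l φ r.toReal ρ x) ^ (1 / r.toReal) := by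
  rw [barDelta, eLpNorm_eq_lintegral_rpow_enorm_toReal hr hr', openCube_eq_ball _ hρ,
    setLIntegral_ball_eq hρ, ← diffMean_eq_ballAvg, mul_assoc, mul_left_comm]
  exact rpow_neg_div_mul_rpow (by simpa using hρ) ofReal_ne_top (ENNReal.toReal_pos hr hr') n _

lemma deltaE_openCube_eq (hr : r ≠ 0) (hr' : r ≠ ∞) {ρ : ℝ} (hρ : 0 < ρ) (hφ : Measurable φ)
    (x : Rn n) :
    deltaE n l r (2 * ρ) (openCube x ρ) φ =
      (2 ^ n * ballAvg ρ (diffMean l φ r.toReal (2 * ρ)) x) ^ (1 / r.toReal) := by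
  have hρ₂ : 0 < 2 * ρ := by positivity
  have hmeas : Measurable fun hx : Rn n × Rn n => ‖diffl l hx.1 φ hx.2‖ₑ ^ r.toReal :=
    (measurable_diffl l hφ measurable_fst measurable_snd).enorm.pow_const _
  rw [deltaE, eLpNorm_eq_lintegral_rpow_enorm_toReal hr hr', openCube_eq_ball _ hρ,
    openCube_eq_ball _ hρ₂, lintegral_prod_symm _ hmeas.aemeasurable]
  simp only [setLIntegral_ball_eq hρ₂, ← diffMean_eq_ballAvg]
  rw [lintegral_const_mul _ (by fun_prop), setLIntegral_ball_eq hρ]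
  convert rpow_neg_div_mul_rpow (S := ENNReal.ofReal (2 * ρ)) (by simpa using hρ) ofReal_ne_top
    (ENNReal.toReal_pos hr hr') (2 * n) _ using 3
  · push_cast
    rfl
  · rw [ENNReal.ofReal_mul zero_le_two, ENNReal.ofReal_ofNat]
    ring

lemma eLpNorm_restrict_openCube_one_eq (hr : r ≠ 0) (hr' : r ≠ ∞) (x : Rn n) :
    eLpNorm φ r (volume.restrict (openCube x 1)) =
      (2 ^ n * ballAvg 1 (fun y => ‖φ y‖ₑ ^ r.toReal) x) ^ (1 / r.toReal) := by
  rw [eLpNorm_eq_lintegral_rpow_enorm_toReal hr hr', openCube_eq_ball _ one_pos,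
    setLIntegral_ball_eq one_pos, ENNReal.ofReal_one, one_pow, mul_one]

lemma lpNormE_mul_rpow_eq {α : Type*} [MeasureSpace α] (hp₀ : p ≠ 0) (hp : p ≠ ∞) {e : ℝ}
    (he : 0 < e) {c : ℝ≥0∞} (hc : c ≠ ∞) (T Y : α → ℝ≥0∞) :
    lpNormE p volume (fun x => T x * (c * Y x) ^ (1 / e)) =
      c ^ e⁻¹ * lpPow (fun x => T x ^ p.toReal) (p.toReal / e) Y ^ p.toReal⁻¹ := by
  have hp' := ENNReal.toReal_pos hp₀ hp
  have hpow : ∀ x, (T x * (c * Y x) ^ (1 / e)) ^ p.toReal =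
      (c ^ e⁻¹) ^ p.toReal * (T x ^ p.toReal * Y x ^ (p.toReal / e)) := fun x => by
    rw [one_div, ENNReal.mul_rpow_of_nonneg _ _ hp'.le,
      ENNReal.mul_rpow_of_nonneg _ _ (inv_nonneg.2 he.le), ENNReal.mul_rpow_of_nonneg _ _ hp'.le,
      ← ENNReal.rpow_mul (Y x), inv_mul_eq_div, mul_left_comm]
  simp only [lpNormE, if_neg hp, hpow]
  rw [lintegral_const_mul' _ _ (by finiteness), one_div, ENNReal.mul_rpow_of_nonneg _ _
    (by positivity), ENNReal.rpow_rpow_inv hp'.ne', lpPow]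

lemma barBnorm_eq (hp₀ : p ≠ 0) (hp : p ≠ ∞) (hq : q ≠ 0) (hr : r ≠ 0) (hr' : r ≠ ∞)
    (t : ℕ → Rn n → ℝ) :
    barBnorm n l p q r t φ = (2 ^ n) ^ r.toReal⁻¹ *
      meansNorm (fun k x => ENNReal.ofReal (t k x) ^ p.toReal) q p.toReal r.toReal φ
        fun k => diffMean l φ r.toReal (dyadicScale (k + 1)) := by
  have hscale : ∀ k : ℕ, (2 : ℝ) ^ (-((k : ℤ) + 1)) = dyadicScale (k + 1) := by simp [dyadicScale]
  have hconv := lpNormE_mul_rpow_eq (α := Rn n) hp₀ hp (ENNReal.toReal_pos hr hr')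
    (c := 2 ^ n) (by finiteness)
  simp only [barBnorm, hscale, barDelta_eq hr hr' (dyadicScale_pos _),
    eLpNorm_restrict_openCube_one_eq hr hr', hconv, lqNorm_const_mul hq, ← mul_add, meansNorm]

lemma tildeBnorm_eq (hp₀ : p ≠ 0) (hp : p ≠ ∞) (hq : q ≠ 0) (hr : r ≠ 0) (hr' : r ≠ ∞)
    (t : ℕ → Rn n → ℝ) (hφ : Measurable φ) :
    tildeBnorm n l p q r t φ = (2 ^ n) ^ r.toReal⁻¹ *
      meansNorm (fun k x => ENNReal.ofReal (t k x) ^ p.toReal) q p.toReal r.toReal φ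
        (cubeDiffMean l φ r.toReal) := by
  have hscale : ∀ k : ℕ, (2 : ℝ) ^ (-((k : ℤ) + 1)) = dyadicScale (k + 1) := by simp [dyadicScale]
  have hscale₂ : ∀ k : ℕ, (2 : ℝ) ^ (1 - ((k : ℤ) + 1)) = 2 * dyadicScale (k + 1) := fun k => by
    rw [← dyadicScale_succ, dyadicScale, sub_add_cancel_right]
  have hcube : ∀ k, cubeDiffMean l φ r.toReal k =
      ballAvg (dyadicScale (k + 1)) (diffMean l φ r.toReal (2 * dyadicScale (k + 1))) := fun k => by
    rw [← dyadicScale_succ, cubeDiffMean]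
  have hconv := lpNormE_mul_rpow_eq (α := Rn n) hp₀ hp (ENNReal.toReal_pos hr hr')
    (c := 2 ^ n) (by finiteness)
  simp only [tildeBnorm, tildeBnormE, hscale, hscale₂,
    deltaE_openCube_eq hr hr' (dyadicScale_pos _) hφ, eLpNorm_restrict_openCube_one_eq hr hr',
    hconv, lqNorm_const_mul hq, ← mul_add, meansNorm, hcube]

lemma memLrLoc_of_meansNorm_ne_top {W : ℕ → Rn n → ℝ≥0∞} (hW : Measurable (W 0))
    (hW₀ : ∀ x, W 0 x ≠ 0) {s : ℝ} (hs : 0 < s) (hr : r ≠ 0) (hr' : r ≠ ∞) (hφ : Measurable φ)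
    {F : ℕ → Rn n → ℝ≥0∞} (h : meansNorm W q s r.toReal φ F ≠ ∞) : MemLrLoc n r φ := by
  have he := ENNReal.toReal_pos hr hr'
  set A : Rn n → ℝ≥0∞ := ballAvg 1 fun y => ‖φ y‖ₑ ^ r.toReal
  have hae : ∀ᵐ x, A x ≠ ∞ := by
    refine ae_ne_top_of_lpPow_ne_top (div_pos hs he) hW hW₀ (by fun_prop) fun htop => h ?_
    rw [meansNorm, htop, ENNReal.top_rpow_of_pos (by positivity), add_top]
  refine ⟨hφ, fun K hK => ?_⟩
  rw [eLpNorm_eq_lintegral_rpow_enorm_toReal hr hr']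
  refine ENNReal.rpow_lt_top_of_nonneg (by positivity) (ne_of_lt ?_)
  refine hK.induction_on (p := fun s => ∫⁻ y in s, ‖φ y‖ₑ ^ r.toReal < ∞) (by simp)
    (fun s t hst ht => (lintegral_mono_set hst).trans_lt ht)
    (fun s t hs ht => (lintegral_union_le _ _ _).trans_lt (ENNReal.add_lt_top.2 ⟨hs, ht⟩)) ?_
  intro z _
  obtain ⟨x, hxz, hx⟩ := (Measure.dense_of_ae hae).inter_open_nonempty _ Metric.isOpen_ball
    ⟨z, Metric.mem_ball_self one_pos⟩
  refine ⟨Metric.ball x 1,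
    mem_nhdsWithin_of_mem_nhds (Metric.isOpen_ball.mem_nhds (Metric.mem_ball_comm.1 hxz)), ?_⟩
  rw [setLIntegral_ball_eq one_pos]
  exact ENNReal.mul_lt_top (by finiteness) (lt_top_iff_ne_top.2 hx)

end

namespace AdmissibleWeights

variable {n l : ℕ} {W : ℕ → Rn n → ℝ≥0∞} {q : ℝ≥0∞} {p a b A₁ A₂ : ℝ}

lemma exists_meansNorm_diffMean_le (hW : AdmissibleWeights W (p / b) A₁ A₂) (hA₁ : 0 < A₁)
    (hl : 0 < l) (hp : 0 < p) (hq : q ≠ 0) (ha : 0 < a) (hab : a ≤ b) :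
    ∃ C : ℝ≥0∞, C ≠ ∞ ∧ ∀ {φ : Rn n → ℝ}, Measurable φ →
      meansNorm W q p a φ (fun k => diffMean l φ a (dyadicScale (k + 1))) ≤
        C * meansNorm W q p b φ (cubeDiffMean l φ b) := by
  obtain ⟨D, hD, hdiff⟩ := hW.exists_lpPow_diffMean_le_tsum hA₁ hl hp ha hab
  obtain ⟨K, hK, hhardy⟩ := exists_lqNorm_rpow_inv_le_of_le_tsum hq hp (half_pos hA₁) hD
  refine ⟨K + 1, by finiteness, fun {φ} hφ => ?_⟩
  unfold meansNorm
  set v : ℕ → ℝ≥0∞ := fun k => lpPow (W (k + 1)) (p / b) (cubeDiffMean l φ b k)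
  rcases eq_or_ne (lqNorm q fun k => v k ^ p⁻¹) ∞ with htop | htop
  · rw [htop, top_add, ENNReal.mul_top (by simp)]
    exact le_top
  have hv : ∀ k, v k ≤ (lqNorm q fun k => v k ^ p⁻¹) ^ p := fun k =>
    (ENNReal.rpow_inv_le_iff hp).1 (le_lqNorm hq (fun k => v k ^ p⁻¹) k)
  have hlq := hhardy (y := v) (hdiff hφ (by finiteness) hv)
  rw [mul_add]
  refine add_le_add (hlq.trans (mul_le_mul_left le_self_add _)) ?_
  refine le_mul_of_one_le_of_le le_add_self (ENNReal.rpow_le_rpow ?_ (by positivity))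
  exact lintegral_mono fun x => mul_le_mul_right
    (ballAvg_enorm_rpow_div_le hφ ha hab hp.le one_pos x) _

lemma exists_meansNorm_cubeDiffMean_le (hW : AdmissibleWeights W (p / b) A₁ A₂) (hl : 0 < l)
    (hp : 0 < p) (hq : q ≠ 0) (ha : 0 < a) (hab : a ≤ b) :
    ∃ C : ℝ≥0∞, C ≠ ∞ ∧ ∀ {φ : Rn n → ℝ}, Measurable φ →
      meansNorm W q p b φ (cubeDiffMean l φ b) ≤
        C * meansNorm W q p a φ (fun k => diffMean l φ a (dyadicScale (k + 1))) := by
  have hb : 0 < b := ha.trans_le hab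
  have hp' : 0 < p⁻¹ := by positivity
  obtain ⟨D₁, hD₁, htail⟩ := hW.exists_lpPow_cubeDiffMean_le hl hp ha hab
  obtain ⟨D₂, hD₂, hhead⟩ := hW.exists_lpPow_cubeDiffMean_le_enorm hl hp hb
  obtain ⟨D₃, hD₃, hzero⟩ := hW.exists_lpPow_ballAvg_one_le_enorm hp hb
  obtain ⟨D₄, hD₄, henorm⟩ := hW.exists_lpPow_enorm_le hl hp ha
  set D := D₁ ^ p⁻¹ + ((D₂ + D₃) * D₄) ^ p⁻¹ * 2 ^ p⁻¹
  have hD : D ≠ ∞ := by finiteness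
  obtain ⟨C, hC, hshift⟩ := exists_lqNorm_le_of_shift hq (l + 1) hD
  refine ⟨C + D, by finiteness, fun {φ} hφ => ?_⟩
  set z := meansNorm W q p a φ fun k => diffMean l φ a (dyadicScale (k + 1))
  set u : ℕ → ℝ≥0∞ := fun k => lpPow (W (k + 1)) (p / a) (diffMean l φ a (dyadicScale (k + 1)))
  have hφz : ∀ {v : ℝ≥0∞}, v ≤ (D₂ + D₃) * lpPow (W 0) p (fun x => ‖φ x‖ₑ) → v ^ p⁻¹ ≤ D * z := by
    intro v hv
    refine (ENNReal.rpow_le_rpow (hv.trans (mul_le_mul_right (henorm hφ) _)) hp'.le).trans ?_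
    rw [← mul_assoc, ENNReal.mul_rpow_of_nonneg _ _ hp'.le]
    refine (mul_le_mul_right (add_rpow_le_two_rpow_mul _ _ hp') _).trans ?_
    rw [← mul_assoc]
    exact mul_le_mul' le_add_self
      (add_le_add_left (le_lqNorm hq (fun k => u k ^ p⁻¹) 0) _)
  have hlq := hshift (x := fun k => u k ^ p⁻¹) (z := z)
    (y := fun k => lpPow (W (k + 1)) (p / b) (cubeDiffMean l φ b k) ^ p⁻¹)
    (fun i => (ENNReal.rpow_le_rpow (htail hφ i) hp'.le).trans <| by
      rw [ENNReal.mul_rpow_of_nonneg _ _ hp'.le]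
      exact mul_le_mul_left le_self_add _)
    (fun k hk => hφz ((hhead hφ k (Nat.lt_succ_iff.1 hk)).trans (mul_le_mul_left le_self_add _)))
    le_self_add
  rw [add_mul]
  exact add_le_add hlq (hφz ((hzero hφ).trans (mul_le_mul_left le_add_self _)))

end AdmissibleWeights

section

variable {n l : ℕ} {p q r : ℝ≥0∞} {t : ℕ → Rn n → ℝ} {φ : Rn n → ℝ}

lemma one_le_two_pow_rpow (n : ℕ) {s : ℝ} (hs : 0 < s) : (1 : ℝ≥0∞) ≤ (2 ^ n) ^ s :=
  ENNReal.one_le_rpow (one_le_pow₀ one_le_two) hs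

lemma memLrLoc_of_mul_meansNorm_lt_top (ht : IsWeight (t 0)) (hp₀ : p ≠ 0) (hp : p ≠ ∞)
    (hr : r ≠ 0) (hr' : r ≠ ∞) (hφ : Measurable φ) {F : ℕ → Rn n → ℝ≥0∞}
    (h : (2 ^ n) ^ r.toReal⁻¹ * meansNorm (fun k x => ENNReal.ofReal (t k x) ^ p.toReal) q p.toReal
      r.toReal φ F < ∞) : MemLrLoc n r φ := by
  have hF : meansNorm (fun k x => ENNReal.ofReal (t k x) ^ p.toReal) q p.toReal r.toReal φ F ≠ ∞ :=
    ne_top_of_le_ne_top h.ne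
      (le_mul_of_one_le_left' (one_le_two_pow_rpow n (inv_pos.2 (ENNReal.toReal_pos hr hr'))))
  refine memLrLoc_of_meansNorm_ne_top (ht.1.ennreal_ofReal.pow_const _) (fun x => ?_)
    (ENNReal.toReal_pos hp₀ hp) hr hr' hφ hF
  simp [ht.2 x]

lemma memBarB_iff (ht : IsWeight (t 0)) (hp₀ : p ≠ 0) (hp : p ≠ ∞) (hq : q ≠ 0) (hr : r ≠ 0)
    (hr' : r ≠ ∞) (hφ : Measurable φ) : MemBarB n l p q r t φ ↔ barBnorm n l p q r t φ < ∞ :=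
  ⟨And.right, fun h => ⟨memLrLoc_of_mul_meansNorm_lt_top ht hp₀ hp hr hr' hφ
    (barBnorm_eq hp₀ hp hq hr hr' t ▸ h), h⟩⟩

lemma memTildeB_iff (ht : IsWeight (t 0)) (hp₀ : p ≠ 0) (hp : p ≠ ∞) (hq : q ≠ 0) (hr : r ≠ 0)
    (hr' : r ≠ ∞) (hφ : Measurable φ) : MemTildeB n l p q r t φ ↔ tildeBnorm n l p q r t φ < ∞ :=
  ⟨And.right, fun h => ⟨memLrLoc_of_mul_meansNorm_lt_top ht hp₀ hp hr hr' hφ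
    (tildeBnorm_eq hp₀ hp hq hr hr' t hφ ▸ h), h⟩⟩

end

namespace AdmissibleWeights

variable {n l : ℕ} {p q r₁ r₂ : ℝ≥0∞} {t : ℕ → Rn n → ℝ} {A₁ A₂ : ℝ}

lemma exists_barBnorm_le
    (hW : AdmissibleWeights (fun k x => ENNReal.ofReal (t k x) ^ p.toReal)
      (p.toReal / r₂.toReal) A₁ A₂)
    (hA₁ : 0 < A₁) (hl : 0 < l) (hp₀ : p ≠ 0) (hp : p ≠ ∞) (hq : q ≠ 0) (hr₁ : r₁ ≠ 0)
    (hr₁₂ : r₁ ≤ r₂) (hr₂ : r₂ ≠ ∞) :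
    ∃ C : ℝ≥0∞, C ≠ ∞ ∧ ∀ {φ : Rn n → ℝ}, Measurable φ →
      barBnorm n l p q r₁ t φ ≤ C * tildeBnorm n l p q r₂ t φ := by
  have hr₁' : r₁ ≠ ∞ := ne_top_of_le_ne_top hr₂ hr₁₂
  have hr₂₀ : r₂ ≠ 0 := (hr₁.bot_lt.trans_le hr₁₂).ne'
  have ha := ENNReal.toReal_pos hr₁ hr₁'
  have hb := ENNReal.toReal_pos hr₂₀ hr₂
  obtain ⟨C, hC, h⟩ := hW.exists_meansNorm_diffMean_le hA₁ hl (ENNReal.toReal_pos hp₀ hp) hq ha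
    (ENNReal.toReal_mono hr₂ hr₁₂)
  refine ⟨(2 ^ n) ^ r₁.toReal⁻¹ * C, by finiteness, fun {φ} hφ => ?_⟩
  rw [barBnorm_eq hp₀ hp hq hr₁ hr₁', tildeBnorm_eq hp₀ hp hq hr₂₀ hr₂ t hφ, mul_assoc]
  gcongr
  refine (h hφ).trans (mul_le_mul_right ?_ _)
  exact le_mul_of_one_le_left' (one_le_two_pow_rpow n (inv_pos.2 hb))

lemma exists_tildeBnorm_le
    (hW : AdmissibleWeights (fun k x => ENNReal.ofReal (t k x) ^ p.toReal)
      (p.toReal / r₂.toReal) A₁ A₂)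
    (hl : 0 < l) (hp₀ : p ≠ 0) (hp : p ≠ ∞) (hq : q ≠ 0) (hr₁ : r₁ ≠ 0)
    (hr₁₂ : r₁ ≤ r₂) (hr₂ : r₂ ≠ ∞) :
    ∃ C : ℝ≥0∞, C ≠ ∞ ∧ ∀ {φ : Rn n → ℝ}, Measurable φ →
      tildeBnorm n l p q r₂ t φ ≤ C * barBnorm n l p q r₁ t φ := by
  have hr₁' : r₁ ≠ ∞ := ne_top_of_le_ne_top hr₂ hr₁₂
  have hr₂₀ : r₂ ≠ 0 := (hr₁.bot_lt.trans_le hr₁₂).ne'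
  have ha := ENNReal.toReal_pos hr₁ hr₁'
  obtain ⟨C, hC, h⟩ := hW.exists_meansNorm_cubeDiffMean_le hl (ENNReal.toReal_pos hp₀ hp) hq ha
    (ENNReal.toReal_mono hr₂ hr₁₂)
  refine ⟨(2 ^ n) ^ r₂.toReal⁻¹ * C, by finiteness, fun {φ} hφ => ?_⟩
  rw [barBnorm_eq hp₀ hp hq hr₁ hr₁', tildeBnorm_eq hp₀ hp hq hr₂₀ hr₂ t hφ, mul_assoc]
  gcongr
  refine (h hφ).trans (mul_le_mul_right ?_ _)
  exact le_mul_of_one_le_left' (one_le_two_pow_rpow n (inv_pos.2 ha))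

end AdmissibleWeights

lemma le_toReal_div_toReal {p r : ℝ≥0∞} (hp : p ≠ ∞) (hr : r ≠ 0) {p₀ : ℝ} (hp₀ : 0 < p₀)
    (h : r ≤ p / ENNReal.ofReal p₀) : p₀ ≤ p.toReal / r.toReal := by
  have hdiv : p / ENNReal.ofReal p₀ ≠ ∞ := ENNReal.div_ne_top hp (by simpa using hp₀)
  have hr' := ENNReal.toReal_pos hr (ne_top_of_le_ne_top hdiv h)
  have hreal := ENNReal.toReal_mono hdiv h
  rwa [ENNReal.toReal_div, ENNReal.toReal_ofReal hp₀.le, le_div_comm₀ hr' hp₀] at hreal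

theorem barB_eq_tildeB_weighted_general (n l : ℕ) (hl : 0 < l)
    (p q : ℝ≥0∞) (hp0 : 0 < p) (hp : p < ∞) (hq : 0 < q)
    (p₀ : ℝ) (hp₀ : 1 ≤ p₀) (r₁ r₂ : ℝ≥0∞) (hr₁ : 0 < r₁) (hr₁₂ : r₁ ≤ r₂)
    (hr₂ : r₂ ≤ p / ENNReal.ofReal p₀)
    (γ : Rn n → ℝ) (hγ : IsWeight γ) (hA : MemAlocP n p₀ (fun x => γ x ^ p.toReal))
    (α₁ α₂ α₃ : ℝ) (hα₁ : 0 < α₁) (s : ℕ → Rn n → ℝ) (hs : MemLocY n α₁ α₂ α₃ s) :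
    ∃ C₁ C₂ : ℝ≥0∞, 0 < C₁ ∧ C₁ < ∞ ∧ 0 < C₂ ∧ C₂ < ∞ ∧
      ∀ φ : Rn n → ℝ, Measurable φ →
        (MemBarB n l p q r₁ (fun k x => γ x * s k x) φ ↔
          MemTildeB n l p q r₂ (fun k x => γ x * s k x) φ) ∧
        C₁ * barBnorm n l p q r₁ (fun k x => γ x * s k x) φ ≤
          tildeBnorm n l p q r₂ (fun k x => γ x * s k x) φ ∧
        tildeBnorm n l p q r₂ (fun k x => γ x * s k x) φ ≤
          C₂ * barBnorm n l p q r₁ (fun k x => γ x * s k x) φ := by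
  have hp₀' : 0 < p₀ := one_pos.trans_le hp₀
  have hr₂₀ : r₂ ≠ 0 := (hr₁.trans_le hr₁₂).ne'
  have hr₂' : r₂ ≠ ∞ :=
    ne_top_of_le_ne_top (ENNReal.div_ne_top hp.ne (by simpa using hp₀')) hr₂
  have hr₁' : r₁ ≠ ∞ := ne_top_of_le_ne_top hr₂' hr₁₂
  have hpp : 0 < p.toReal := ENNReal.toReal_pos hp0.ne' hp.ne
  have hW := admissibleWeights_of_memLocY hpp hp₀
    (le_toReal_div_toReal hp.ne hr₂₀ hp₀' hr₂) hγ hA hs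
  have ht : IsWeight fun x => γ x * s 0 x :=
    ⟨hγ.1.mul (hs.1 0).1, fun x => mul_pos (hγ.2 x) ((hs.1 0).2 x)⟩
  obtain ⟨C, hC, hbar⟩ :=
    hW.exists_barBnorm_le (by positivity) hl hp0.ne' hp.ne hq.ne' hr₁.ne' hr₁₂ hr₂'
  obtain ⟨D, hD, htilde⟩ := hW.exists_tildeBnorm_le hl hp0.ne' hp.ne hq.ne' hr₁.ne' hr₁₂ hr₂'
  refine ⟨(C + 1)⁻¹, D + 1, by simpa using hC, by simp, by simp, by finiteness,
    fun φ hφ => ⟨?_, ?_, (htilde hφ).trans (mul_le_mul_left le_self_add _)⟩⟩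
  · rw [memBarB_iff (t := fun k x => γ x * s k x) ht hp0.ne' hp.ne hq.ne' hr₁.ne' hr₁' hφ,
      memTildeB_iff (t := fun k x => γ x * s k x) ht hp0.ne' hp.ne hq.ne' hr₂₀ hr₂' hφ]
    exact ⟨fun h => (htilde hφ).trans_lt (ENNReal.mul_lt_top hD.lt_top h),
      fun h => (hbar hφ).trans_lt (ENNReal.mul_lt_top hC.lt_top h)⟩
  · rw [ENNReal.inv_mul_le_iff (by simp) (by finiteness)]
    exact (hbar hφ).trans (mul_le_mul_left le_self_add _)

/-- **Theorem 2.5: for `t_k = γ · s_k` with `γ^p ∈ A^{loc}_{p₀}` and `{s_k} ∈ locY`,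
the spaces `B̄^l_{p,q,r₁}` and `B̃^l_{p,q,r₂}` coincide with equivalent quasinorms.** -/
theorem barB_eq_tildeB_weighted (n l : ℕ) (hn : 0 < n) (hl : 0 < l)
    (p q : ℝ≥0∞) (hp0 : 0 < p) (hp : p < ∞) (hq : 0 < q)
    (p₀ : ℝ) (hp₀ : 1 ≤ p₀) (r₁ r₂ : ℝ≥0∞) (hr₁ : 0 < r₁) (hr₁₂ : r₁ ≤ r₂)
    (hr₂ : r₂ ≤ p / ENNReal.ofReal p₀)
    (γ : Rn n → ℝ) (hγ : IsWeight γ) (hA : MemAlocP n p₀ (fun x => γ x ^ p.toReal))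
    (α₁ α₂ α₃ : ℝ) (hα₃ : 0 ≤ α₃) (hα₁ : 0 < α₁) (hα₁₂ : α₁ ≤ α₂) (hα₂ : α₂ < l)
    (s : ℕ → Rn n → ℝ) (hs : MemLocY n α₁ α₂ α₃ s) :
    ∃ C₁ C₂ : ℝ≥0∞, 0 < C₁ ∧ C₁ < ∞ ∧ 0 < C₂ ∧ C₂ < ∞ ∧
      ∀ φ : Rn n → ℝ, Measurable φ →
        (MemBarB n l p q r₁ (fun k x => γ x * s k x) φ ↔
          MemTildeB n l p q r₂ (fun k x => γ x * s k x) φ) ∧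
        C₁ * barBnorm n l p q r₁ (fun k x => γ x * s k x) φ ≤
          tildeBnorm n l p q r₂ (fun k x => γ x * s k x) φ ∧
        tildeBnorm n l p q r₂ (fun k x => γ x * s k x) φ ≤
          C₂ * barBnorm n l p q r₁ (fun k x => γ x * s k x) φ := by
  exact barB_eq_tildeB_weighted_general n l hl p q hp0 hp hq p₀ hp₀ r₁ r₂ hr₁ hr₁₂ hr₂ γ hγ hA
    α₁ α₂ α₃ hα₁ s hs

end
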